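/- arXiv:2411.01323 — 3 statements merged into one kernel-verified Lean document; each statement's English description precedes it below -/
import Mathlib

section
/- Let K = GF(q) be a finite field with q ≡ 3 (mod 4) and (V, f) a finite-dimensional nondegenerate symmetric bilinear space over K. Let φ ∈ Ω(V) and suppose there exists η ∈ O(V) with η² = −id and ηφη⁻¹ = φ⁻¹. Then φ is bireflectional in Ω(V). -/
open Polynomial Module

namespace Biref

variable {K V : Type*} [Field K] [AddCommGroup V] [Module K V]

/-- The orthogonal group of a bilinear form: all linear automorphisms preserving `f`. -/
def orthGroup (f : LinearMap.BilinForm K V) : Subgroup (V ≃ₗ[K] V) where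
  carrier := {φ | ∀ x y : V, f (φ x) (φ y) = f x y}
  one_mem' := fun _ _ => rfl
  mul_mem' := by
    intro a b ha hb x y
    simpa using (ha (b x) (b y)).trans (hb x y)
  inv_mem' := by
    intro a ha x y
    show f (a.symm x) (a.symm y) = f x y
    conv_rhs => rw [← a.apply_symm_apply x, ← a.apply_symm_apply y]
    exact (ha _ _).symm

/-- The special orthogonal group: isometries of determinant 1. -/
def specialOrthGroup (f : LinearMap.BilinForm K V) : Subgroup (V ≃ₗ[K] V) where
  carrier := {φ | (∀ x y : V, f (φ x) (φ y) = f x y) ∧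
      LinearMap.det (φ : V →ₗ[K] V) = 1}
  one_mem' := ⟨fun _ _ => rfl, by simp⟩
  mul_mem' := by
    rintro a b ⟨ha, ha'⟩ ⟨hb, hb'⟩
    refine ⟨fun x y => by simpa using (ha (b x) (b y)).trans (hb x y), ?_⟩
    rw [LinearEquiv.coe_toLinearMap_mul, map_mul, ha', hb', one_mul]
  inv_mem' := by
    rintro a ⟨ha, ha'⟩
    refine ⟨fun x y => ?_, ?_⟩
    · show f (a.symm x) (a.symm y) = f x y
      conv_rhs => rw [← a.apply_symm_apply x, ← a.apply_symm_apply y]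
      exact (ha _ _).symm
    · have h1 : LinearMap.det ((a⁻¹ * a : V ≃ₗ[K] V) : V →ₗ[K] V) = 1 := by
        rw [inv_mul_cancel, LinearEquiv.coe_toLinearMap_one, LinearMap.det_id]
      rw [LinearEquiv.coe_toLinearMap_mul, map_mul, ha', mul_one] at h1
      exact h1

/-- The commutator subgroup `Ω(V)` of the orthogonal group. -/
def omegaGroup (f : LinearMap.BilinForm K V) : Subgroup (V ≃ₗ[K] V) :=
  ⁅orthGroup f, orthGroup f⁆

/-- `g` is a product of two involutions lying in the subgroup `H`. -/
def IsBireflectionalIn {G : Type*} [Group G] (H : Subgroup G) (g : G) : Prop :=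
  ∃ σ τ : G, σ ∈ H ∧ τ ∈ H ∧ σ ^ 2 = 1 ∧ τ ^ 2 = 1 ∧ g = σ * τ

/-- `g` is bireflectional in the group `G`. -/
def IsBireflectional {G : Type*} [Group G] (g : G) : Prop :=
  ∃ σ τ : G, σ ^ 2 = 1 ∧ τ ^ 2 = 1 ∧ g = σ * τ

/-- `g` is reversed by some element of `H`. -/
def IsReversibleIn {G : Type*} [Group G] (H : Subgroup G) (g : G) : Prop :=
  ∃ α : G, α ∈ H ∧ α * g * α⁻¹ = g⁻¹

/-- A subspace is invariant under an endomorphism. -/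
def Invt (ψ : V →ₗ[K] V) (U : Submodule K V) : Prop :=
  ∀ x ∈ U, ψ x ∈ U

/-- The discriminant of a (finite-dimensional, nondegenerate) bilinear space is the class
of `d` in `K*/(K*)²`: some Gram determinant equals `d` times a nonzero square. -/
def HasDisc (f : LinearMap.BilinForm K V) (d : K) : Prop :=
  ∃ (b : Basis (Fin (Module.finrank K V)) K V) (c : Kˣ),
    (Matrix.of fun i j => f (b i) (b j)).det = d * (c : K) ^ 2

/-- A nondegenerate symmetric bilinear space is hyperbolic iff its Witt index is half its
dimension, i.e. there is a totally isotropic subspace of half the dimension. -/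
def IsHyperbolicSpace (f : LinearMap.BilinForm K V) : Prop :=
  ∃ W : Submodule K V, (∀ x ∈ W, ∀ y ∈ W, f x y = 0) ∧
    2 * Module.finrank K W = Module.finrank K V

/-- The multiplicity of `p ^ d` as an elementary divisor of `φ`. -/
noncomputable def edMult (φ : Module.End K V) (p : K[X]) (d : ℕ) : ℕ :=
  (2 * Module.finrank K (LinearMap.ker (Polynomial.aeval φ p ^ d))
    - Module.finrank K (LinearMap.ker (Polynomial.aeval φ p ^ (d + 1)))
    - Module.finrank K (LinearMap.ker (Polynomial.aeval φ p ^ (d - 1)))) / p.natDegree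

/-- `n_j(φ)`: the number of elementary divisors `(x ± 1) ^ d` of `φ` with `d ≡ j mod 8`,
counted with multiplicity. -/
noncomputable def nPM [FiniteDimensional K V] (φ : Module.End K V) (j : ℕ) : ℕ :=
  ∑ d ∈ Finset.range (Module.finrank K V + 1),
    if d % 8 = j % 8 then edMult φ (X - 1) d + edMult φ (X + 1) d else 0

/-- The Fitting one space `Bahn^∞(ψ) = ⋂ⱼ im (ψ - 1)^j`. -/
noncomputable def bahnInf (ψ : Module.End K V) : Submodule K V :=
  ⨅ j : ℕ, LinearMap.range ((ψ - 1) ^ j)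

/-- The `K[x]`-submodule generated by `v` (`x` acting as `ψ`). -/
def cycSub (ψ : Module.End K V) (v : V) : Submodule K V :=
  Submodule.span K (Set.range fun n : ℕ => (ψ ^ n) v)

/-- `V` is a cyclic `K[x]`-module, `x` acting as `ψ`. -/
def IsCyclicEnd (ψ : Module.End K V) : Prop :=
  ∃ v : V, cycSub ψ v = ⊤

/-- `V` is a direct sum of two cyclic `K[x]`-submodules, `x` acting as `ψ`. -/
def IsBicyclicEnd (ψ : Module.End K V) : Prop :=
  ∃ v w : V, cycSub ψ v ⊓ cycSub ψ w = ⊥ ∧ cycSub ψ v ⊔ cycSub ψ w = ⊤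

/-- `V` is an indecomposable `K[x]`-module, `x` acting as `ψ`. -/
def ModIndec (ψ : Module.End K V) : Prop :=
  (⊥ : Submodule K V) ≠ ⊤ ∧
    ¬∃ A B : Submodule K V, Invt ψ A ∧ Invt ψ B ∧ A ≠ ⊥ ∧ B ≠ ⊥ ∧ A ⊓ B = ⊥ ∧ A ⊔ B = ⊤

/-- `ψ` is orthogonally indecomposable w.r.t. `f`: `V ≠ 0` and the only nondegenerate
invariant subspaces are `0` and `V`. -/
def OrthIndec (f : LinearMap.BilinForm K V) (ψ : Module.End K V) : Prop :=
  (⊥ : Submodule K V) ≠ ⊤ ∧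
    ∀ U : Submodule K V, Invt ψ U → (f.restrict U).Nondegenerate → U = ⊥ ∨ U = ⊤

/-- The Witt index: the dimension of a maximal totally isotropic subspace. -/
noncomputable def wittIndex (f : LinearMap.BilinForm K V) : ℕ :=
  sSup {n | ∃ W : Submodule K V, (∀ x ∈ W, ∀ y ∈ W, f x y = 0) ∧ Module.finrank K W = n}

/-!
Put `d = φ - φ⁻¹` and `s = φ + φ⁻¹`. An involution `σ` reverses `φ` as soon as it commutes with `s`
and anticommutes with `d`. Suppose that `V` is the orthogonal sum of `N` and `ηN`, and `N` that of
`M₁` and `M₂`, where `s` preserves `M₁` and `M₂` while `d` interchanges them. Then the isometry `σ`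
that is `1` on `M₁ + ηM₁` and `-1` on `M₂ + ηM₂` has this property. It lies in `Ω(V)`, being the
commutator of the isometry that is `1` on `M₁ + ηM₁` and `η` on `M₂ + ηM₂` with the one that is `1`
on `N` and `-1` on `ηN`.

Such a decomposition exists on `V` if it exists on the orthogonally indecomposable summands. If `V`
is indecomposable, then `p(s)` is nilpotent for some irreducible `p`. Since the operators `η` and
`ηd` are skew-adjoint and commute with `s`, the subspace `N = K[s]v + dK[s]v` is orthogonal to `ηN`
for every `v`, so it is enough to find `v` with `N` nondegenerate. This works if `p` does not divide
`X² - 4`, for then `d` is invertible. Otherwise `d` is nilpotent, `s` is a polynomial in `d²` and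
`N = K[d]v`. Let `dᵐ ≠ 0 = dᵐ⁺¹`. If `m` is even, the form `(x, y) ↦ f(x, dᵐy)` is symmetric and any
`v` with `f(v, dᵐv) ≠ 0` will do. If `m` is odd the form is alternating, and a second generator `w`
with `f(w, dᵐv) ≠ 0` is needed, orthogonal to `K[s]v` and `ηK[d]v`. It exists because `-1` is not a
square in `K`, which makes `K[d]v` and `ηK[d]v` intersect trivially.
-/

section BilinearForms

variable {f : LinearMap.BilinForm K V} {A B W : Submodule K V} {g g' : Module.End K V}

theorem skewAdjoint_apply (hg : f.IsSkewAdjoint g) (x y : V) : f (g x) y = -f x (g y) := by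
  simpa using hg x y

theorem isAdjointPair_aeval (h : LinearMap.IsAdjointPair f f g g') (a : K[X]) :
    LinearMap.IsAdjointPair f f (aeval g a) (aeval g' a) := by
  have pow (n : ℕ) : LinearMap.IsAdjointPair f f ⇑(g ^ n) ⇑(g' ^ n) := by
    induction n with
    | zero => exact LinearMap.isAdjointPair_one
    | succ n ih => rw [pow_succ, pow_succ']; exact ih.mul h
  intro x y
  induction a using Polynomial.induction_on' with
  | add a b ha hb => simp only [map_add, LinearMap.add_apply, ha, hb]
  | monomial n c =>
    simp only [aeval_monomial, ← Algebra.smul_def, LinearMap.smul_apply, map_smul, pow n x y]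

theorem orthogonal_mem_invtSubmodule (h : LinearMap.IsAdjointPair f f g g')
    (hW : W ∈ End.invtSubmodule g) : f.orthogonal W ∈ End.invtSubmodule g' :=
  fun y hy x hx => (h x y).symm.trans (hy (g x) (hW hx))

theorem orthogonal_mem_invtSubmodule_of_isSkewAdjoint (hg : f.IsSkewAdjoint g)
    (hW : W ∈ End.invtSubmodule g) : f.orthogonal W ∈ End.invtSubmodule g := fun y hy => by
  simpa using orthogonal_mem_invtSubmodule (g' := -g) hg hW hy

theorem le_orthogonal_comm (hf : f.IsSymm) : A ≤ f.orthogonal B ↔ B ≤ f.orthogonal A :=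
  ⟨fun h _ hb _ ha => hf.isRefl _ _ (h ha _ hb), fun h _ ha _ hb => hf.isRefl _ _ (h hb _ ha)⟩

theorem orthogonal_sup (f : LinearMap.BilinForm K V) (A B : Submodule K V) :
    f.orthogonal (A ⊔ B) = f.orthogonal A ⊓ f.orthogonal B := by
  refine le_antisymm (le_inf (LinearMap.BilinForm.orthogonal_le le_sup_left)
    (LinearMap.BilinForm.orthogonal_le le_sup_right)) fun x ⟨hA, hB⟩ y hy => ?_
  obtain ⟨a, ha, b, hb, rfl⟩ := Submodule.mem_sup.1 hy
  rw [map_add, LinearMap.add_apply, hA a ha, hB b hb, add_zero]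

theorem sup_le_orthogonal_sup (hf : f.IsSymm) {W' A' B' : Submodule K V}
    (hWW' : W ≤ f.orthogonal W') (hA : A ≤ W) (hB : B ≤ W) (hA' : A' ≤ W') (hB' : B' ≤ W')
    (hAB : A ≤ f.orthogonal B) (hA'B' : A' ≤ f.orthogonal B') :
    A ⊔ A' ≤ f.orthogonal (B ⊔ B') := by
  have hAB' : A ≤ f.orthogonal B' :=
    hA.trans (hWW'.trans (LinearMap.BilinForm.orthogonal_le hB'))
  have hA'B : A' ≤ f.orthogonal B :=
    hA'.trans (((le_orthogonal_comm hf).1 hWW').trans (LinearMap.BilinForm.orthogonal_le hB))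
  rw [orthogonal_sup]
  exact sup_le (le_inf hAB hAB') (le_inf hA'B hA'B')

theorem map_le_orthogonal_comm (hf : f.IsSymm) (hg : f.IsSkewAdjoint g) :
    A.map g ≤ f.orthogonal B ↔ B.map g ≤ f.orthogonal A := by
  simp only [Submodule.map_le_iff_le_comap]
  have apply_comm (a b : V) : f b (g a) = -f a (g b) := by
    rw [← skewAdjoint_apply hg]; exact hf.eq _ _
  constructor <;> intro h x hx y hy <;> rw [apply_comm, h hy x hx, neg_zero]

theorem disjoint_orthogonal_sup (hf : f.IsSymm) (hAB : A ≤ f.orthogonal B)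
    (hA : Disjoint A (f.orthogonal A)) (hB : Disjoint B (f.orthogonal B)) :
    Disjoint (A ⊔ B) (f.orthogonal (A ⊔ B)) := by
  have hBA := (le_orthogonal_comm hf).1 hAB
  rw [Submodule.disjoint_def] at hA hB ⊢
  intro x hx hx'
  obtain ⟨a, ha, b, hb, rfl⟩ := Submodule.mem_sup.1 hx
  rw [orthogonal_sup] at hx'
  have ha0 : a = 0 := hA a ha (by simpa using sub_mem hx'.1 (hBA hb))
  have hb0 : b = 0 := hB b hb (by simpa using sub_mem hx'.2 (hAB ha))
  rw [ha0, hb0, add_zero]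

theorem isCompl_of_le_orthogonal (hf : f.IsSymm) (hnd : f.Nondegenerate)
    (hAB : A ≤ f.orthogonal B) (htop : A ⊔ B = ⊤) : IsCompl A B := by
  refine ⟨disjoint_iff_inf_le.2 ?_, codisjoint_iff.2 htop⟩
  rw [← LinearMap.BilinForm.orthogonal_top_eq_bot hnd, ← htop, orthogonal_sup, inf_comm]
  exact inf_le_inf ((le_orthogonal_comm hf).1 hAB) hAB

theorem exists_mem_orthogonal_ne_zero [FiniteDimensional K V] (hf : f.IsSymm)
    (hnd : f.Nondegenerate) {x : V} (hx : x ∉ W) : ∃ y ∈ f.orthogonal W, f y x ≠ 0 := by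
  rw [← LinearMap.BilinForm.orthogonal_orthogonal hnd hf.isRefl W] at hx
  simpa [LinearMap.BilinForm.mem_orthogonal_iff] using hx

theorem exists_apply_self_ne_zero (h2 : (2 : K) ≠ 0) (hf : f.IsSymm) (hnd : f.Nondegenerate)
    (hg : LinearMap.IsSelfAdjoint f g) (hg0 : g ≠ 0) : ∃ v, f v (g v) ≠ 0 := by
  have : Invertible (2 : K) := invertibleOfNonzero h2
  refine LinearMap.BilinForm.exists_bilinForm_self_ne_zero (B := f.compl₂ g) (fun h0 => hg0 ?_)
    ⟨fun x y => ?_⟩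
  · ext y
    exact hnd.2 _ fun x => LinearMap.congr_fun₂ h0 x y
  · exact (hg x y).symm.trans (hf.eq _ _)

theorem disjoint_ker_orthogonal (hnd : f.Nondegenerate) (hg : LinearMap.IsSelfAdjoint f g)
    (hker : Codisjoint (LinearMap.ker g) (LinearMap.range g)) :
    Disjoint (LinearMap.ker g) (f.orthogonal (LinearMap.ker g)) := by
  have hrange : LinearMap.ker g ≤ f.orthogonal (LinearMap.range g) := by
    rintro x (hx : g x = 0) _ ⟨y, rfl⟩
    rw [hg y x, hx, map_zero]
  rw [disjoint_iff_inf_le, ← LinearMap.BilinForm.orthogonal_top_eq_bot hnd, ← hker.eq_top,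
    orthogonal_sup, inf_comm]
  exact inf_le_inf_left _ hrange

theorem disjoint_orthogonal_map_of_isSkewAdjoint (hg : f.IsSkewAdjoint g)
    (hA : Disjoint A (f.orthogonal A)) (hgg : A ≤ (A.map g).map g) :
    Disjoint (A.map g) (f.orthogonal (A.map g)) := by
  rw [Submodule.disjoint_def] at hA ⊢
  rintro _ ⟨x, hx, rfl⟩ hgx
  have hx0 : x = 0 := hA x hx <| LinearMap.BilinForm.orthogonal_le hgg <| by
    rintro _ ⟨y, hy, rfl⟩
    rw [skewAdjoint_apply hg, hgx y hy, neg_zero]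
  rw [hx0, map_zero]

theorem skewAdjoint_pow_apply (hg : f.IsSkewAdjoint g) (n : ℕ) (x y : V) :
    f ((g ^ n) x) y = (-1) ^ n * f x ((g ^ n) y) := by
  induction n generalizing x with
  | zero => simp
  | succ n ih =>
    rw [pow_succ g, Module.End.mul_apply, ih, skewAdjoint_apply hg, ← Module.End.mul_apply,
      ← pow_succ', ← pow_succ, pow_succ (-1 : K)]
    ring

theorem disjoint_orthogonal_of_pow_succ_eq_zero (hg : f.IsSkewAdjoint g) {m : ℕ}
    (hgm : g ^ (m + 1) = 0) {U₀ U : Submodule K V} (hU : U₀ ⊔ U.map g = U)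
    (hU₀ : ∀ x ∈ U₀, (∀ y ∈ U₀, f y ((g ^ m) x) = 0) → x = 0) :
    Disjoint U (f.orthogonal U) := by
  have hgU : U ∈ End.invtSubmodule g := Submodule.map_le_iff_le_comap.1 (le_sup_right.trans_eq hU)
  refine Submodule.disjoint_def.2 fun x _ hx => ?_
  -- Pairing `x = gⁿ(u₀ + g u₁)` with `gᵐ⁻ⁿU₀` gives `u₀ = 0`, so `x ∈ gⁿ⁺¹U`.
  have mem_map_pow (n : ℕ) (hn : n ≤ m + 1) : x ∈ U.map (g ^ n) := by
    induction n with
    | zero => simpa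
    | succ n ih =>
      obtain ⟨u, hu, rfl⟩ := ih (by lia)
      rw [← hU] at hu
      obtain ⟨u₀, hu₀, _, ⟨u₁, hu₁, rfl⟩, rfl⟩ := Submodule.mem_sup.1 hu
      have hu₀0 : u₀ = 0 := hU₀ u₀ hu₀ fun y hy => by
        have h := hx ((g ^ (m - n)) y)
          (End.pow_apply_mem_of_forall_mem _ hgU _ (hU ▸ Submodule.mem_sup_left hy))
        rw [skewAdjoint_pow_apply hg, ← Module.End.mul_apply, ← pow_add,
          Nat.sub_add_cancel (by lia), map_add, ← Module.End.mul_apply, ← pow_succ, hgm,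
          LinearMap.zero_apply, add_zero] at h
        exact (mul_eq_zero.1 h).resolve_left (pow_ne_zero _ (by simp))
      exact ⟨u₁, hu₁, by rw [hu₀0, zero_add, pow_succ, Module.End.mul_apply]⟩
  obtain ⟨u, -, rfl⟩ := mem_map_pow (m + 1) le_rfl
  rw [hgm, LinearMap.zero_apply]

end BilinearForms

section Polynomials

theorem commute_aeval {A : Type*} [Ring A] [Algebra K A] {x y : A} (h : Commute x y) (a : K[X]) :
    Commute x (aeval y a) :=
  Algebra.commute_of_mem_adjoin_singleton_of_commute (aeval_mem_adjoin_singleton K y) h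

open scoped Classical in
theorem exists_mul_add_mul_eq_prime_pow {p c : K[X]} (hp : Prime p) {k : ℕ}
    (hc : ¬p ^ (k + 1) ∣ c) : ∃ t u : K[X], t * c + u * p ^ (k + 1) = p ^ k := by
  have hgcd : EuclideanDomain.gcd c (p ^ (k + 1)) ∣ p ^ k := by
    obtain ⟨i, hi, hpi⟩ := (dvd_prime_pow hp _).1 (EuclideanDomain.gcd_dvd_right c (p ^ (k + 1)))
    have hik : i ≠ k + 1 := by
      rintro rfl
      exact hc (hpi.symm.dvd.trans (EuclideanDomain.gcd_dvd_left _ _))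
    exact hpi.dvd.trans (pow_dvd_pow p (by lia))
  obtain ⟨r, hr⟩ := hgcd
  rw [EuclideanDomain.gcd_eq_gcd_ab] at hr
  exact ⟨EuclideanDomain.gcdA c (p ^ (k + 1)) * r, EuclideanDomain.gcdB c (p ^ (k + 1)) * r,
    by linear_combination -hr⟩

/-- Since `h` is a local parameter at `c`, it has a compositional inverse power series there; `g` is
a truncation of it. -/
theorem exists_dvd_comp_sub_X {h : K[X]} {c : K} (hc : h.IsRoot c)
    (hc' : h.derivative.eval c ≠ 0) (n : ℕ) : ∃ g : K[X], (X - C c) ^ n ∣ g.comp h - X := by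
  obtain ⟨u, rfl⟩ := dvd_iff_isRoot.2 hc
  have hu : u.eval c ≠ 0 := by simpa [derivative_mul] using hc'
  induction n with
  | zero => exact ⟨0, by simp⟩
  | succ n ih =>
    obtain ⟨g, r, hr⟩ := ih
    set b := r.eval c / u.eval c ^ n
    have hroot : (r - C b * u ^ n).IsRoot c := by
      simp [b, IsRoot, hu]
    obtain ⟨e, he⟩ := dvd_iff_isRoot.2 hroot
    refine ⟨g - C b * X ^ n, e, ?_⟩
    simp only [sub_comp, mul_comp, C_comp, X_pow_comp, mul_pow]
    linear_combination hr + (X - C c) ^ n * he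

theorem exists_aeval_aeval_eq_self {A : Type*} [Ring A] [Algebra K A] {h : K[X]} {c : K}
    (hc : h.IsRoot c) (hc' : h.derivative.eval c ≠ 0) {s : A}
    (hs : IsNilpotent (s - algebraMap K A c)) : ∃ g : K[X], aeval (aeval s h) g = s := by
  obtain ⟨n, hn⟩ := hs
  obtain ⟨g, r, hr⟩ := exists_dvd_comp_sub_X hc hc' n
  refine ⟨g, sub_eq_zero.1 ?_⟩
  simpa [aeval_comp, hn] using congrArg (aeval s) hr

theorem exists_isNilpotent_sub_algebraMap {A : Type*} [Ring A] [Algebra K A] {s : A} {p : K[X]}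
    (hp : Irreducible p) (hnil : IsNilpotent (aeval s p))
    (hdvd : p ∣ X ^ 2 - C 4) :
    ∃ c : K, c ^ 2 = 4 ∧ IsNilpotent (s - algebraMap K _ c) := by
  have of_dvd (c : K) (hpc : p ∣ X - C c) : IsNilpotent (s - algebraMap K _ c) := by
    obtain ⟨q, hq⟩ := hpc
    have hsc : s - algebraMap K _ c = aeval s p * aeval s q := by
      simpa using congrArg (aeval s) hq
    rw [hsc]
    exact Commute.isNilpotent_mul_right
      (commute_aeval (commute_aeval (Commute.refl s) p).symm q) hnil
  have hfac : (X ^ 2 - C 4 : K[X]) = (X - C 2) * (X - C (-2)) := by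
    rw [C_neg, show (4 : K) = 2 * 2 by norm_num, C_mul]
    ring
  obtain hp2 | hp2 := hp.prime.dvd_or_dvd (hfac ▸ hdvd)
  · exact ⟨2, by norm_num, of_dvd 2 hp2⟩
  · exact ⟨-2, by norm_num, of_dvd (-2) hp2⟩

end Polynomials

section CyclicSubmodules

variable {f : LinearMap.BilinForm K V} {W : Submodule K V} {g ψ : Module.End K V} {v w x : V}

theorem mem_cycSub_iff : x ∈ cycSub ψ v ↔ ∃ a : K[X], aeval ψ a v = x := by
  suffices h : cycSub ψ v = LinearMap.range (LinearMap.applyₗ v ∘ₗ (aeval ψ).toLinearMap) by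
    simp [h]
  refine le_antisymm (Submodule.span_le.2 ?_) ?_
  · rintro _ ⟨n, rfl⟩
    exact ⟨X ^ n, by simp⟩
  · rintro _ ⟨a, rfl⟩
    simp only [LinearMap.coe_comp, Function.comp_apply, AlgHom.toLinearMap_apply,
      LinearMap.applyₗ_apply_apply, aeval_eq_sum_range, LinearMap.sum_apply, LinearMap.smul_apply]
    exact sum_mem fun n _ => Submodule.smul_mem _ _ (Submodule.subset_span ⟨n, rfl⟩)

theorem self_mem_cycSub (ψ : Module.End K V) (v : V) : v ∈ cycSub ψ v :=
  Submodule.subset_span ⟨0, rfl⟩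

theorem cycSub_mem_invtSubmodule (ψ : Module.End K V) (v : V) :
    cycSub ψ v ∈ End.invtSubmodule ψ := by
  intro x hx
  obtain ⟨a, rfl⟩ := mem_cycSub_iff.1 hx
  exact mem_cycSub_iff.2 ⟨X * a, by simp⟩

theorem cycSub_le (hW : W ∈ End.invtSubmodule ψ) (hv : v ∈ W) : cycSub ψ v ≤ W :=
  Submodule.span_le.2 <| Set.range_subset_iff.2 fun n =>
    End.pow_apply_mem_of_forall_mem n hW v hv

theorem aeval_mem_invtSubmodule (hW : W ∈ End.invtSubmodule ψ) (a : K[X]) :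
    W ∈ End.invtSubmodule (aeval ψ a) :=
  fun _ hx => cycSub_le hW hx (mem_cycSub_iff.2 ⟨a, rfl⟩)

theorem cycSub_aeval_le (ψ : Module.End K V) (a : K[X]) (v : V) :
    cycSub (aeval ψ a) v ≤ cycSub ψ v :=
  cycSub_le (aeval_mem_invtSubmodule (cycSub_mem_invtSubmodule ψ v) a) (self_mem_cycSub ψ v)

theorem cycSub_zero (ψ : Module.End K V) : cycSub ψ 0 = ⊥ :=
  le_bot_iff.1 (cycSub_le (End.invtSubmodule.bot_mem ψ) (zero_mem _))

theorem map_cycSub (hg : Commute g ψ) (v : V) : (cycSub ψ v).map g = cycSub ψ (g v) := by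
  rw [cycSub, cycSub, Submodule.map_span, ← Set.range_comp]
  congr 2 with n
  exact LinearMap.congr_fun (hg.pow_right n) v

theorem span_singleton_sup_map_cycSub (ψ : Module.End K V) (v : V) :
    Submodule.span K {v} ⊔ (cycSub ψ v).map ψ = cycSub ψ v := by
  have hv : Submodule.span K {v} ≤ cycSub ψ v :=
    (Submodule.span_singleton_le_iff_mem _ _).2 (self_mem_cycSub ψ v)
  have hmap : (cycSub ψ v).map ψ ≤ cycSub ψ v :=
    Submodule.map_le_iff_le_comap.2 (cycSub_mem_invtSubmodule ψ v)
  refine le_antisymm (sup_le hv hmap) (cycSub_le ?_ ?_)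
  · exact fun x hx => Submodule.mem_sup_right ⟨x, sup_le hv hmap hx, rfl⟩
  · exact Submodule.mem_sup_left (Submodule.mem_span_singleton_self v)

theorem cycSub_le_orthogonal_cycSub (hψ : LinearMap.IsSelfAdjoint f ψ)
    (hw : w ∈ f.orthogonal (cycSub ψ v)) : cycSub ψ w ≤ f.orthogonal (cycSub ψ v) :=
  cycSub_le (orthogonal_mem_invtSubmodule hψ (cycSub_mem_invtSubmodule ψ v)) hw

theorem map_cycSub_le_orthogonal_cycSub (h2 : (2 : K) ≠ 0) (hf : f.IsSymm)
    (hψ : LinearMap.IsSelfAdjoint f ψ) (hg : f.IsSkewAdjoint g) (hgψ : Commute g ψ) (v : V) :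
    (cycSub ψ v).map g ≤ f.orthogonal (cycSub ψ v) := by
  rw [map_cycSub hgψ]
  refine cycSub_le_orthogonal_cycSub hψ fun x hx => ?_
  obtain ⟨a, rfl⟩ := mem_cycSub_iff.1 hx
  have hga : aeval ψ a (g v) = g (aeval ψ a v) :=
    (LinearMap.congr_fun (commute_aeval hgψ a).eq v).symm
  have hneg : f (aeval ψ a v) (g v) = -f (aeval ψ a v) (g v) := calc
    f (aeval ψ a v) (g v) = f v (g (aeval ψ a v)) := by rw [isAdjointPair_aeval hψ, hga]
    _ = f (g (aeval ψ a v)) v := (hf.eq _ _).symm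
    _ = -f (aeval ψ a v) (g v) := skewAdjoint_apply hg _ _
  exact (mul_eq_zero.1 (by linear_combination hneg : 2 * f (aeval ψ a v) (g v) = 0)).resolve_left h2

theorem pow_dvd_of_aeval_apply_eq_zero {p : K[X]} (hp : Prime p) {k : ℕ}
    (hk : aeval ψ p ^ (k + 1) = 0) (hv : (aeval ψ p ^ k) v ≠ 0) {c : K[X]}
    (hc : aeval ψ c v = 0) : p ^ (k + 1) ∣ c := by
  by_contra hdvd
  obtain ⟨t, u, htu⟩ := exists_mul_add_mul_eq_prime_pow hp hdvd
  rw [← map_pow, ← htu] at hv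
  simp [hk, hc] at hv

theorem disjoint_cycSub_orthogonal_of_prime (hψ : LinearMap.IsSelfAdjoint f ψ) {p : K[X]}
    (hp : Prime p) {k : ℕ} (hk : aeval ψ p ^ (k + 1) = 0) (hv : f v ((aeval ψ p ^ k) v) ≠ 0) :
    Disjoint (cycSub ψ v) (f.orthogonal (cycSub ψ v)) := by
  refine Submodule.disjoint_def.2 fun x hx hx' => by_contra fun hx0 => hv ?_
  obtain ⟨c, rfl⟩ := mem_cycSub_iff.1 hx
  have hc : ¬p ^ (k + 1) ∣ c := by
    rintro ⟨r, rfl⟩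
    simp [hk] at hx0
  obtain ⟨t, u, htu⟩ := exists_mul_add_mul_eq_prime_pow hp hc
  have htc : aeval ψ t (aeval ψ c v) = (aeval ψ p ^ k) v := by
    rw [← map_pow, ← htu]
    simp [hk]
  rw [← htc]
  exact aeval_mem_invtSubmodule
    (orthogonal_mem_invtSubmodule hψ (cycSub_mem_invtSubmodule ψ v)) t hx' v (self_mem_cycSub ψ v)

end CyclicSubmodules

section ReversalTriples

variable {f : LinearMap.BilinForm K V} {η d s : Module.End K V}

/-- The identities satisfied by `d = φ - φ⁻¹` and `s = φ + φ⁻¹` when the isometry `φ` is reversed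
by the isometry `η` with `η² = -1`. -/
structure IsReversalTriple (f : LinearMap.BilinForm K V) (η d s : Module.End K V) : Prop where
  isSymm : f.IsSymm
  nondegenerate : f.Nondegenerate
  skew_η : f.IsSkewAdjoint η
  skew_d : f.IsSkewAdjoint d
  selfAdjoint_s : LinearMap.IsSelfAdjoint f s
  η_mul_η : η * η = -1
  η_mul_d : η * d = -(d * η)
  commute_η_s : Commute η s
  commute_d_s : Commute d s
  d_mul_d : d * d = s * s - 4

/-- The subspaces invariant under each of `η`, `d` and `s`. -/
def invtSubmodules (η d s : Module.End K V) : Sublattice (Submodule K V) :=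
  End.invtSubmodule η ⊓ End.invtSubmodule d ⊓ End.invtSubmodule s

/-- A decomposition `W = N + ηN` with `N = M₁ + M₂` orthogonal to `ηN` and `M₁` to `M₂`, such that
`s` preserves `M₁` and `M₂` while `d` interchanges them. The involution that is `1` on `M₁ + ηM₁`
and `-1` on `M₂ + ηM₂` then commutes with `s` and anticommutes with `d`. -/
structure IsSplitting (f : LinearMap.BilinForm K V) (η d s : Module.End K V)
    (M₁ M₂ W : Submodule K V) : Prop where
  sup_map_eq : (M₁ ⊔ M₂) ⊔ (M₁ ⊔ M₂).map η = W
  le_orthogonal : M₁ ≤ f.orthogonal M₂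
  map_le_orthogonal : (M₁ ⊔ M₂).map η ≤ f.orthogonal (M₁ ⊔ M₂)
  invt_left : M₁ ∈ End.invtSubmodule s
  invt_right : M₂ ∈ End.invtSubmodule s
  left_le_comap : M₁ ≤ M₂.comap d
  right_le_comap : M₂ ≤ M₁.comap d

/-- `V` is not the orthogonal sum of two nonzero subspaces invariant under `η`, `d` and `s`. -/
def IsIndecomposable (f : LinearMap.BilinForm K V) (η d s : Module.End K V) : Prop :=
  ∀ W ∈ invtSubmodules η d s, Disjoint W (f.orthogonal W) → W = ⊥ ∨ W = ⊤

theorem orthogonal_mem_invtSubmodules (h : IsReversalTriple f η d s) {W : Submodule K V}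
    (hW : W ∈ invtSubmodules η d s) : f.orthogonal W ∈ invtSubmodules η d s :=
  ⟨⟨orthogonal_mem_invtSubmodule_of_isSkewAdjoint h.skew_η hW.1.1,
    orthogonal_mem_invtSubmodule_of_isSkewAdjoint h.skew_d hW.1.2⟩,
    orthogonal_mem_invtSubmodule h.selfAdjoint_s hW.2⟩

theorem IsReversalTriple.restrict (h : IsReversalTriple f η d s) {W : Submodule K V}
    (hW : W ∈ invtSubmodules η d s) (hnd : Disjoint W (f.orthogonal W)) :
    IsReversalTriple (f.restrict W) (η.restrict hW.1.1) (d.restrict hW.1.2) (s.restrict hW.2) where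
  isSymm := ⟨fun x y => h.isSymm.eq x y⟩
  nondegenerate :=
    LinearMap.BilinForm.nondegenerate_restrict_of_disjoint_orthogonal f h.isSymm.isRefl hnd
  skew_η x y := h.skew_η x y
  skew_d x y := h.skew_d x y
  selfAdjoint_s x y := h.selfAdjoint_s x y
  η_mul_η := LinearMap.ext fun x => Subtype.ext (LinearMap.congr_fun h.η_mul_η x)
  η_mul_d := LinearMap.ext fun x => Subtype.ext (LinearMap.congr_fun h.η_mul_d x)
  commute_η_s := LinearMap.ext fun x => Subtype.ext (LinearMap.congr_fun h.commute_η_s.eq x)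
  commute_d_s := LinearMap.ext fun x => Subtype.ext (LinearMap.congr_fun h.commute_d_s.eq x)
  d_mul_d := LinearMap.ext fun x => Subtype.ext (LinearMap.congr_fun h.d_mul_d x)

theorem isSplitting_bot : IsSplitting f η d s ⊥ ⊥ ⊥ where
  sup_map_eq := by simp
  le_orthogonal := bot_le
  map_le_orthogonal := by simp
  invt_left := End.invtSubmodule.bot_mem s
  invt_right := End.invtSubmodule.bot_mem s
  left_le_comap := bot_le
  right_le_comap := bot_le

theorem IsSplitting.map_subtype {W : Submodule K V} (hW : W ∈ invtSubmodules η d s)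
    {M₁ M₂ : Submodule K W}
    (h : IsSplitting (f.restrict W) (η.restrict hW.1.1) (d.restrict hW.1.2) (s.restrict hW.2)
      M₁ M₂ ⊤) :
    IsSplitting f η d s (M₁.map W.subtype) (M₂.map W.subtype) W where
  sup_map_eq := by
    have hsubtype : η ∘ₗ W.subtype = W.subtype ∘ₗ η.restrict hW.1.1 := rfl
    rw [← Submodule.map_sup, ← Submodule.map_comp, hsubtype, Submodule.map_comp,
      ← Submodule.map_sup, h.sup_map_eq, Submodule.map_subtype_top]
  le_orthogonal := by
    rintro _ ⟨x, hx, rfl⟩ _ ⟨y, hy, rfl⟩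
    exact h.le_orthogonal hx y hy
  map_le_orthogonal := by
    rw [← Submodule.map_sup]
    rintro _ ⟨_, ⟨x, hx, rfl⟩, rfl⟩ _ ⟨y, hy, rfl⟩
    exact h.map_le_orthogonal (Submodule.mem_map_of_mem hx) y hy
  invt_left := by rintro _ ⟨x, hx, rfl⟩; exact ⟨_, h.invt_left hx, rfl⟩
  invt_right := by rintro _ ⟨x, hx, rfl⟩; exact ⟨_, h.invt_right hx, rfl⟩
  left_le_comap := by rintro _ ⟨x, hx, rfl⟩; exact ⟨_, h.left_le_comap hx, rfl⟩
  right_le_comap := by rintro _ ⟨x, hx, rfl⟩; exact ⟨_, h.right_le_comap hx, rfl⟩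

theorem IsSplitting.left_sup_right_le {W M₁ M₂ : Submodule K V}
    (h : IsSplitting f η d s M₁ M₂ W) : M₁ ⊔ M₂ ≤ W :=
  le_sup_left.trans_eq h.sup_map_eq

theorem IsSplitting.map_le {W M₁ M₂ : Submodule K V} (h : IsSplitting f η d s M₁ M₂ W) :
    (M₁ ⊔ M₂).map η ≤ W :=
  le_sup_right.trans_eq h.sup_map_eq

theorem IsSplitting.sup (hf : f.IsSymm) {W W' M₁ M₂ M₁' M₂' : Submodule K V}
    (hWW' : W ≤ f.orthogonal W') (h : IsSplitting f η d s M₁ M₂ W)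
    (h' : IsSplitting f η d s M₁' M₂' W') :
    IsSplitting f η d s (M₁ ⊔ M₁') (M₂ ⊔ M₂') (W ⊔ W') where
  sup_map_eq := by
    rw [← h.sup_map_eq, ← h'.sup_map_eq, sup_sup_sup_comm M₁, Submodule.map_sup _ (M₁' ⊔ M₂'),
      sup_sup_sup_comm (M₁ ⊔ M₂)]
  le_orthogonal := sup_le_orthogonal_sup hf hWW' (le_sup_left.trans h.left_sup_right_le)
    (le_sup_right.trans h.left_sup_right_le) (le_sup_left.trans h'.left_sup_right_le)
    (le_sup_right.trans h'.left_sup_right_le) h.le_orthogonal h'.le_orthogonal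
  map_le_orthogonal := by
    rw [sup_sup_sup_comm M₁, Submodule.map_sup]
    exact sup_le_orthogonal_sup hf hWW' h.map_le h.left_sup_right_le h'.map_le
      h'.left_sup_right_le h.map_le_orthogonal h'.map_le_orthogonal
  invt_left := End.invtSubmodule.sup_mem h.invt_left h'.invt_left
  invt_right := End.invtSubmodule.sup_mem h.invt_right h'.invt_right
  left_le_comap := sup_le (h.left_le_comap.trans (Submodule.comap_mono le_sup_left))
    (h'.left_le_comap.trans (Submodule.comap_mono le_sup_right))
  right_le_comap := sup_le (h.right_le_comap.trans (Submodule.comap_mono le_sup_left))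
    (h'.right_le_comap.trans (Submodule.comap_mono le_sup_right))

end ReversalTriples

section BicyclicSubmodules

variable {f : LinearMap.BilinForm K V} {η d s : Module.End K V} {N : Submodule K V} {v w : V}

/-- The subspace `K[s]v + dK[s]w`. When `d² ∈ K[s]`, the operator `d` maps it into
`bicycSub d s w v`, and `bicycSub d s v v` is the `K[d, s]`-submodule generated by `v`. -/
def bicycSub (d s : Module.End K V) (v w : V) : Submodule K V :=
  cycSub s v ⊔ (cycSub s w).map d

theorem bicycSub_zero_zero (d s : Module.End K V) : bicycSub d s 0 0 = ⊥ := by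
  simp [bicycSub, cycSub_zero]

theorem bicycSub_sup_bicycSub_comm (d s : Module.End K V) (v w : V) :
    bicycSub d s v w ⊔ bicycSub d s w v = bicycSub d s v v ⊔ bicycSub d s w w := by
  rw [bicycSub, bicycSub, sup_comm (cycSub s w), sup_sup_sup_comm, sup_comm (Submodule.map _ _),
    bicycSub, bicycSub]

theorem bicycSub_self_le (hd : N ∈ End.invtSubmodule d) (hs : N ∈ End.invtSubmodule s)
    (hv : v ∈ N) : bicycSub d s v v ≤ N :=
  sup_le (cycSub_le hs hv) ((Submodule.map_mono (cycSub_le hs hv)).trans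
    (Submodule.map_le_iff_le_comap.2 hd))

theorem bicycSub_mem_invtSubmodule (hds : Commute d s) (v w : V) :
    bicycSub d s v w ∈ End.invtSubmodule s := by
  rw [bicycSub, map_cycSub hds]
  exact End.invtSubmodule.sup_mem (cycSub_mem_invtSubmodule s v) (cycSub_mem_invtSubmodule s (d w))

namespace IsReversalTriple

theorem η_η_apply (h : IsReversalTriple f η d s) (x : V) : η (η x) = -x := by
  simpa using LinearMap.congr_fun h.η_mul_η x

theorem d_η_apply (h : IsReversalTriple f η d s) (x : V) : d (η x) = -η (d x) := by
  simpa using congrArg Neg.neg (LinearMap.congr_fun h.η_mul_d x).symm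

theorem d_mul_d_eq_aeval (h : IsReversalTriple f η d s) : d * d = aeval s (X ^ 2 - C 4 : K[X]) := by
  rw [h.d_mul_d, map_sub, map_pow, aeval_X, aeval_C, map_ofNat, sq]

theorem map_d_map_d_le (h : IsReversalTriple f η d s) (hN : N ∈ End.invtSubmodule s) :
    (N.map d).map d ≤ N := by
  rw [← Submodule.map_comp, ← Module.End.mul_eq_comp, h.d_mul_d_eq_aeval,
    Submodule.map_le_iff_le_comap]
  exact aeval_mem_invtSubmodule hN _

theorem map_η_map_η (h : IsReversalTriple f η d s) (N : Submodule K V) :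
    (N.map η).map η = N := by
  rw [← Submodule.map_comp, ← Module.End.mul_eq_comp, h.η_mul_η, Submodule.map_neg]
  exact Submodule.map_id N

theorem bicycSub_le_comap (h : IsReversalTriple f η d s) (v w : V) :
    bicycSub d s v w ≤ (bicycSub d s w v).comap d := by
  rw [← Submodule.map_le_iff_le_comap, bicycSub, Submodule.map_sup, sup_comm]
  exact sup_le_sup_right (h.map_d_map_d_le (cycSub_mem_invtSubmodule s w)) _

theorem map_η_le_comap_d (h : IsReversalTriple f η d s) {N' : Submodule K V}
    (hN : N ≤ N'.comap d) : N.map η ≤ (N'.map η).comap d := by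
  rintro _ ⟨x, hx, rfl⟩
  exact ⟨-d x, neg_mem (hN hx), by rw [map_neg, h.d_η_apply]⟩

theorem map_η_mem_invtSubmodule_s (h : IsReversalTriple f η d s) (hN : N ∈ End.invtSubmodule s) :
    N.map η ∈ End.invtSubmodule s := by
  rintro _ ⟨x, hx, rfl⟩
  exact ⟨s x, hN hx, LinearMap.congr_fun h.commute_η_s.eq x⟩

theorem sup_map_η_mem_invtSubmodule_η (h : IsReversalTriple f η d s) (N : Submodule K V) :
    N ⊔ N.map η ∈ End.invtSubmodule η := by
  rw [End.mem_invtSubmodule_iff_map_le, Submodule.map_sup, h.map_η_map_η, sup_comm]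

theorem sup_map_η_mem_invtSubmodules (h : IsReversalTriple f η d s)
    (hd : N ∈ End.invtSubmodule d) (hs : N ∈ End.invtSubmodule s) :
    N ⊔ N.map η ∈ invtSubmodules η d s :=
  ⟨⟨h.sup_map_η_mem_invtSubmodule_η N, End.invtSubmodule.sup_mem hd (h.map_η_le_comap_d hd)⟩,
    End.invtSubmodule.sup_mem hs (h.map_η_mem_invtSubmodule_s hs)⟩

theorem skew_η_mul_d (h : IsReversalTriple f η d s) : f.IsSkewAdjoint ⇑(η * d) := by
  intro x y
  simp [skewAdjoint_apply h.skew_η, skewAdjoint_apply h.skew_d, h.d_η_apply]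

theorem map_η_bicycSub_self_le_orthogonal (h : IsReversalTriple f η d s) (h2 : (2 : K) ≠ 0)
    (v : V) : (bicycSub d s v v).map η ≤ f.orthogonal (bicycSub d s v v) := by
  have skew_η (u : V) : (cycSub s u).map η ≤ f.orthogonal (cycSub s u) :=
    map_cycSub_le_orthogonal_cycSub h2 h.isSymm h.selfAdjoint_s h.skew_η h.commute_η_s u
  have skew_ηd : ((cycSub s v).map d).map η ≤ f.orthogonal (cycSub s v) := by
    rw [← Submodule.map_comp]
    exact map_cycSub_le_orthogonal_cycSub h2 h.isSymm h.selfAdjoint_s h.skew_η_mul_d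
      (h.commute_η_s.mul_left h.commute_d_s) v
  rw [bicycSub, Submodule.map_sup, orthogonal_sup]
  refine sup_le (le_inf (skew_η v) ?_) (le_inf skew_ηd ?_)
  · rwa [map_le_orthogonal_comm h.isSymm h.skew_η]
  · rw [map_cycSub h.commute_d_s]
    exact skew_η (d v)

theorem bicycSub_le_orthogonal_bicycSub (h : IsReversalTriple f η d s) (h2 : (2 : K) ≠ 0)
    (hw : w ∈ f.orthogonal (cycSub s v)) :
    bicycSub d s v w ≤ f.orthogonal (bicycSub d s w v) := by
  have skew (u : V) := map_cycSub_le_orthogonal_cycSub h2 h.isSymm h.selfAdjoint_s h.skew_d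
    h.commute_d_s u
  have hwv := cycSub_le_orthogonal_cycSub h.selfAdjoint_s hw
  rw [bicycSub, bicycSub, orthogonal_sup]
  refine sup_le (le_inf ((le_orthogonal_comm h.isSymm).1 hwv)
    ((le_orthogonal_comm h.isSymm).1 (skew v))) (le_inf (skew w) ?_)
  rw [map_le_orthogonal_comm h.isSymm h.skew_d]
  exact (h.map_d_map_d_le (cycSub_mem_invtSubmodule s v)).trans
    ((le_orthogonal_comm h.isSymm).1 hwv)

theorem isSplitting_bicycSub (h : IsReversalTriple f η d s) (h2 : (2 : K) ≠ 0)
    (hw : w ∈ f.orthogonal (cycSub s v)) (hwη : w ∈ f.orthogonal ((bicycSub d s v v).map η)) :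
    IsSplitting f η d s (bicycSub d s v w) (bicycSub d s w v)
      (bicycSub d s v v ⊔ bicycSub d s w w ⊔ (bicycSub d s v v ⊔ bicycSub d s w w).map η) where
  sup_map_eq := by rw [bicycSub_sup_bicycSub_comm]
  le_orthogonal := h.bicycSub_le_orthogonal_bicycSub h2 hw
  map_le_orthogonal := by
    have hη := h.map_η_bicycSub_self_le_orthogonal h2
    have hwv : bicycSub d s w w ≤ f.orthogonal ((bicycSub d s v v).map η) :=
      bicycSub_self_le
        (orthogonal_mem_invtSubmodule_of_isSkewAdjoint h.skew_d
          (h.map_η_le_comap_d (h.bicycSub_le_comap v v)))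
        (orthogonal_mem_invtSubmodule h.selfAdjoint_s
          (h.map_η_mem_invtSubmodule_s (bicycSub_mem_invtSubmodule h.commute_d_s v v))) hwη
    have hvw := (le_orthogonal_comm h.isSymm).1 hwv
    rw [bicycSub_sup_bicycSub_comm, Submodule.map_sup, orthogonal_sup]
    exact sup_le (le_inf (hη v) hvw)
      (le_inf ((map_le_orthogonal_comm h.isSymm h.skew_η).1 hvw) (hη w))
  invt_left := bicycSub_mem_invtSubmodule h.commute_d_s v w
  invt_right := bicycSub_mem_invtSubmodule h.commute_d_s w v
  left_le_comap := h.bicycSub_le_comap v w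
  right_le_comap := h.bicycSub_le_comap w v

theorem exists_isSplitting_top_of_disjoint_sup (h : IsReversalTriple f η d s) (h2 : (2 : K) ≠ 0)
    (hindec : IsIndecomposable f η d s) (hv : v ≠ 0) (hw : w ∈ f.orthogonal (cycSub s v))
    (hwη : w ∈ f.orthogonal ((bicycSub d s v v).map η))
    (hnd : Disjoint (bicycSub d s v v ⊔ bicycSub d s w w)
      (f.orthogonal (bicycSub d s v v ⊔ bicycSub d s w w))) :
    ∃ M₁ M₂, IsSplitting f η d s M₁ M₂ ⊤ := by
  have hsplit := h.isSplitting_bicycSub h2 hw hwη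
  set N := bicycSub d s v v ⊔ bicycSub d s w w
  have hNη : N ≤ f.orthogonal (N.map η) := by
    have := hsplit.map_le_orthogonal
    rwa [bicycSub_sup_bicycSub_comm, le_orthogonal_comm h.isSymm] at this
  have hinvt : N ⊔ N.map η ∈ invtSubmodules η d s :=
    h.sup_map_η_mem_invtSubmodules
      (End.invtSubmodule.sup_mem (h.bicycSub_le_comap v v) (h.bicycSub_le_comap w w))
      (End.invtSubmodule.sup_mem (bicycSub_mem_invtSubmodule h.commute_d_s v v)
        (bicycSub_mem_invtSubmodule h.commute_d_s w w))
  have hnd' : Disjoint (N ⊔ N.map η) (f.orthogonal (N ⊔ N.map η)) :=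
    disjoint_orthogonal_sup h.isSymm hNη hnd
      (disjoint_orthogonal_map_of_isSkewAdjoint h.skew_η hnd (h.map_η_map_η N).ge)
  obtain hbot | htop := hindec _ hinvt hnd'
  · have hvN : v ∈ N ⊔ N.map η := Submodule.mem_sup_left <| Submodule.mem_sup_left <|
      Submodule.mem_sup_left (self_mem_cycSub s v)
    rw [hbot] at hvN
    exact absurd hvN hv
  · exact ⟨_, _, htop ▸ hsplit⟩

theorem exists_isSplitting_top_of_disjoint (h : IsReversalTriple f η d s) (h2 : (2 : K) ≠ 0)
    (hindec : IsIndecomposable f η d s) (hv : v ≠ 0)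
    (hnd : Disjoint (bicycSub d s v v) (f.orthogonal (bicycSub d s v v))) :
    ∃ M₁ M₂, IsSplitting f η d s M₁ M₂ ⊤ :=
  h.exists_isSplitting_top_of_disjoint_sup h2 hindec hv (zero_mem _) (zero_mem _)
    (by rwa [bicycSub_zero_zero, sup_bot_eq])

end IsReversalTriple

end BicyclicSubmodules

section Indecomposable

variable {f : LinearMap.BilinForm K V} {η d s : Module.End K V}

theorem exists_pow_ne_zero_of_isNilpotent {R : Type*} [Ring R] [Nontrivial R] {x : R}
    (hx : IsNilpotent x) : ∃ k, x ^ k ≠ 0 ∧ x ^ (k + 1) = 0 := by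
  obtain ⟨k, hk⟩ := Nat.exists_eq_succ_of_ne_zero (pos_nilpotencyClass_iff.2 hx).ne'
  exact ⟨k, (nilpotencyClass_eq_succ_iff.1 hk).symm⟩

theorem ker_mem_invtSubmodule {g T : Module.End K V} (hgT : Commute g T) :
    LinearMap.ker T ∈ End.invtSubmodule g := fun x (hx : T x = 0) => by
  change T (g x) = 0
  rw [← Module.End.mul_apply, ← hgT.eq, Module.End.mul_apply, hx, map_zero]

theorem eq_bot_of_isNilpotent_of_disjoint_ker {g : Module.End K V} (hg : IsNilpotent g)
    {W : Submodule K V} (hW : W ∈ End.invtSubmodule g) (hker : Disjoint W (LinearMap.ker g)) :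
    W = ⊥ := by
  obtain ⟨n, hn⟩ := hg
  suffices ∀ x ∈ W, (g ^ n) x = 0 → x = 0 from
    (Submodule.eq_bot_iff W).2 fun x hx => this x hx (by rw [hn, LinearMap.zero_apply])
  clear hn
  induction n with
  | zero => simp
  | succ n ih =>
    exact fun x hx hgx => Submodule.disjoint_def.1 hker x hx (ih (g x) (hW hx) hgx)

/-- Fitting's lemma. -/
theorem IsIndecomposable.isNilpotent [FiniteDimensional K V] (h : IsReversalTriple f η d s)
    (hindec : IsIndecomposable f η d s) {a : K[X]} (ha : LinearMap.ker (aeval s a) ≠ ⊥) :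
    IsNilpotent (aeval s a) := by
  obtain ⟨n, hn⟩ := Filter.eventually_atTop.1 (aeval s a).eventually_isCompl_ker_pow_range_pow
  have hcompl := hn (n + 1) n.le_succ
  rw [← map_pow] at hcompl
  have hinvt : LinearMap.ker (aeval s (a ^ (n + 1))) ∈ invtSubmodules η d s :=
    ⟨⟨ker_mem_invtSubmodule (commute_aeval h.commute_η_s _),
      ker_mem_invtSubmodule (commute_aeval h.commute_d_s _)⟩,
      ker_mem_invtSubmodule (commute_aeval (Commute.refl s) _)⟩
  obtain hbot | htop := hindec _ hinvt (disjoint_ker_orthogonal h.nondegenerate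
    (isAdjointPair_aeval h.selfAdjoint_s _) hcompl.codisjoint)
  · rw [map_pow, pow_succ] at hbot
    exact absurd (le_bot_iff.1 ((LinearMap.ker_le_ker_comp _ _).trans_eq hbot)) ha
  · exact ⟨n + 1, by rwa [← map_pow, ← LinearMap.ker_eq_top]⟩

theorem exists_irreducible_ker_aeval_ne_bot [FiniteDimensional K V] [Nontrivial V]
    (ψ : Module.End K V) : ∃ p : K[X], Irreducible p ∧ LinearMap.ker (aeval ψ p) ≠ ⊥ := by
  have hψ : IsIntegral K ψ := Algebra.IsIntegral.isIntegral ψ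
  obtain ⟨p, hp, q, hq⟩ :=
    WfDvdMonoid.exists_irreducible_factor (minpoly.not_isUnit K ψ) (minpoly.ne_zero hψ)
  refine ⟨p, hp, fun hker => ?_⟩
  have hpq : aeval ψ p * aeval ψ q = 0 := by rw [← map_mul, ← hq, minpoly.aeval]
  have hq0 : aeval ψ q = 0 := by
    ext x
    exact LinearMap.ker_eq_bot'.1 hker _ (LinearMap.congr_fun hpq x)
  have hq0' : q ≠ 0 := right_ne_zero_of_mul (hq ▸ minpoly.ne_zero hψ)
  have hdvd : p * q ∣ 1 * q := by
    rw [← hq, one_mul]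
    exact minpoly.dvd K ψ hq0
  exact hp.not_isUnit (isUnit_of_dvd_one ((mul_dvd_mul_iff_right hq0').1 hdvd))

namespace IsReversalTriple

theorem exists_isSplitting_top_of_not_dvd (h : IsReversalTriple f η d s) [Nontrivial V]
    (h2 : (2 : K) ≠ 0) (hindec : IsIndecomposable f η d s) {p : K[X]} (hp : Irreducible p)
    (hnil : IsNilpotent (aeval s p)) (hdvd : ¬p ∣ X ^ 2 - C 4) :
    ∃ M₁ M₂, IsSplitting f η d s M₁ M₂ ⊤ := by
  obtain ⟨k, hk, hk'⟩ := exists_pow_ne_zero_of_isNilpotent hnil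
  obtain ⟨v, hv⟩ : ∃ v, f v ((aeval s p ^ k) v) ≠ 0 := by
    rw [← map_pow] at hk ⊢
    exact exists_apply_self_ne_zero h2 h.isSymm h.nondegenerate
      (isAdjointPair_aeval h.selfAdjoint_s _) hk
  have hnd : Disjoint (cycSub s v) (f.orthogonal (cycSub s v)) :=
    disjoint_cycSub_orthogonal_of_prime h.selfAdjoint_s hp.prime hk' hv
  have hdd : cycSub s v ≤ ((cycSub s v).map d).map d := by
    obtain ⟨a, b, hab⟩ := ((hp.coprime_iff_not_dvd.2 hdvd).pow_left (m := k + 1))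
    have hb : d * d * aeval s b = 1 := by
      simpa [hk', h.d_mul_d_eq_aeval, mul_comm b] using congrArg (aeval s) hab
    exact fun x hx => ⟨d (aeval s b x), ⟨_, aeval_mem_invtSubmodule
      (cycSub_mem_invtSubmodule s v) b hx, rfl⟩, LinearMap.congr_fun hb x⟩
  refine h.exists_isSplitting_top_of_disjoint h2 hindec (v := v) (by rintro rfl; simp at hv) ?_
  exact disjoint_orthogonal_sup h.isSymm
    ((le_orthogonal_comm h.isSymm).1 (map_cycSub_le_orthogonal_cycSub h2 h.isSymm h.selfAdjoint_s
      h.skew_d h.commute_d_s v)) hnd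
    (disjoint_orthogonal_map_of_isSkewAdjoint h.skew_d hnd hdd)

theorem isNilpotent_d (h : IsReversalTriple f η d s) {c : K} (hc : c ^ 2 = 4)
    (hs : IsNilpotent (s - algebraMap K _ c)) : IsNilpotent d := by
  have hdd : d ^ 2 = (s - algebraMap K _ c) * (s + algebraMap K _ c) := by
    rw [sq, h.d_mul_d_eq_aeval, ← hc]
    have hX : (X ^ 2 - C (c ^ 2) : K[X]) = (X - C c) * (X + C c) := by rw [C_pow]; ring
    rw [hX]
    simp
  refine IsNilpotent.of_pow (m := 2) (hdd ▸ ?_)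
  exact Commute.isNilpotent_mul_right
    ((Commute.refl s).add_right (Algebra.commute_algebraMap_right c s) |>.sub_left
      (Algebra.commute_algebraMap_left c _)) hs

theorem exists_aeval_d_mul_d_eq (h : IsReversalTriple f η d s) (h2 : (2 : K) ≠ 0) {c : K}
    (hc : c ^ 2 = 4) (hs : IsNilpotent (s - algebraMap K _ c)) :
    ∃ g : K[X], aeval (d * d) g = s := by
  rw [h.d_mul_d_eq_aeval]
  refine exists_aeval_aeval_eq_self (c := c) (by simp [hc]) ?_ hs
  have hc0 : c ≠ 0 := by
    rintro rfl
    exact mul_ne_zero h2 h2 (by linear_combination -hc)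
  simpa [one_add_one_eq_two] using ⟨h2, hc0⟩

end IsReversalTriple

end Indecomposable

section NilpotentCase

variable {f : LinearMap.BilinForm K V} {η d s : Module.End K V} {v : V} {m : ℕ}

theorem mem_span_pow_apply_of_mem_cycSub (hm : d ^ (m + 1) = 0) (hv : (d ^ m) v ≠ 0) {x : V}
    (hx : x ∈ cycSub d v) (hdx : d x = 0) : x ∈ Submodule.span K {(d ^ m) v} := by
  obtain ⟨P, rfl⟩ := mem_cycSub_iff.1 hx
  have hdvd : X ^ (m + 1) ∣ X * P :=
    pow_dvd_of_aeval_apply_eq_zero (ψ := d) prime_X (by simpa) (by simpa) (by simpa)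
  obtain ⟨Q, rfl⟩ := (mul_dvd_mul_iff_left X_ne_zero).1 (pow_succ' (X : K[X]) m ▸ hdvd)
  have hQ : X ^ m * Q = C (Q.coeff 0) * X ^ m + Q.divX * X ^ (m + 1) := by
    conv_lhs => rw [← divX_mul_X_add Q]
    ring
  refine Submodule.mem_span_singleton.2 ⟨Q.coeff 0, ?_⟩
  rw [hQ]
  simp [hm, Algebra.algebraMap_eq_smul_one]

theorem pow_apply_notMem_cycSub_mul_self (hm : d ^ (m + 1) = 0) (hv : (d ^ m) v ≠ 0)
    (hodd : Odd m) : (d ^ m) v ∉ cycSub (d * d) v := by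
  intro hmem
  obtain ⟨a, ha⟩ := mem_cycSub_iff.1 hmem
  have hdvd : X ^ (m + 1) ∣ expand K 2 a - X ^ m :=
    pow_dvd_of_aeval_apply_eq_zero (ψ := d) prime_X (by simpa) (by simpa)
      (by simp [expand_aeval, sq, ha])
  have hcoeff := X_pow_dvd_iff.1 hdvd m m.lt_succ_self
  simp [coeff_expand, hodd.not_two_dvd_nat] at hcoeff

theorem two_ne_zero_of_not_isSquare_neg_one (hK : ¬IsSquare (-1 : K)) : (2 : K) ≠ 0 :=
  fun h2 => hK ⟨1, by linear_combination -h2⟩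

namespace IsReversalTriple

theorem η_apply_ne_smul (h : IsReversalTriple f η d s) (hK : ¬IsSquare (-1 : K)) {y : V}
    (hy : y ≠ 0) (c : K) : η y ≠ c • y := by
  intro hyc
  have hsq : (c * c + 1) • y = 0 := by
    rw [add_smul, mul_smul, ← hyc, ← map_smul, ← hyc, h.η_η_apply, one_smul, neg_add_cancel]
  exact hK ⟨c, by linear_combination -(smul_eq_zero.1 hsq).resolve_right hy⟩

theorem disjoint_cycSub_map_η (h : IsReversalTriple f η d s) (hK : ¬IsSquare (-1 : K))
    (hm : d ^ (m + 1) = 0) (hv : (d ^ m) v ≠ 0) :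
    Disjoint (cycSub d v) ((cycSub d v).map η) := by
  have hd := cycSub_mem_invtSubmodule d v
  refine disjoint_iff.2 (eq_bot_of_isNilpotent_of_disjoint_ker ⟨m + 1, hm⟩
    (End.invtSubmodule.inf_mem hd (h.map_η_le_comap_d hd))
    (Submodule.disjoint_def.2 ?_))
  rintro _ ⟨hx, x, hx', rfl⟩ (hdx : d (η x) = 0)
  have hdx' : d x = 0 := by
    rw [← neg_eq_zero, ← h.η_η_apply, ← neg_eq_zero, ← map_neg, ← h.d_η_apply, hdx, map_zero]
  obtain ⟨a, ha⟩ := Submodule.mem_span_singleton.1 (mem_span_pow_apply_of_mem_cycSub hm hv hx hdx)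
  obtain ⟨b, rfl⟩ := Submodule.mem_span_singleton.1
    (mem_span_pow_apply_of_mem_cycSub hm hv hx' hdx')
  by_contra hη0
  have hb : b ≠ 0 := by
    rintro rfl
    simp at hη0
  refine h.η_apply_ne_smul hK hv (b⁻¹ * a) ?_
  rw [mul_smul, ha, map_smul, inv_smul_smul₀ hb]

theorem bicycSub_self_eq_cycSub (h : IsReversalTriple f η d s) {g : K[X]}
    (hg : aeval (d * d) g = s) (v : V) : bicycSub d s v v = cycSub d v := by
  have hd := cycSub_mem_invtSubmodule d v
  have hdd : cycSub d v ∈ End.invtSubmodule (d * d) := hd.trans (Submodule.comap_mono hd)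
  refine le_antisymm (bicycSub_self_le hd ?_ (self_mem_cycSub d v))
    (cycSub_le (h.bicycSub_le_comap v v) (Submodule.mem_sup_left (self_mem_cycSub s v)))
  rw [← hg]
  exact aeval_mem_invtSubmodule hdd g

theorem cycSub_s_eq_cycSub_d_mul_d (h : IsReversalTriple f η d s) {g : K[X]}
    (hg : aeval (d * d) g = s) (v : V) : cycSub s v = cycSub (d * d) v := by
  refine le_antisymm ?_ ?_
  · rw [← hg]
    exact cycSub_aeval_le _ g v
  · rw [h.d_mul_d_eq_aeval]
    exact cycSub_aeval_le s _ v

theorem exists_isSplitting_top_of_even (h : IsReversalTriple f η d s) (h2 : (2 : K) ≠ 0)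
    (hindec : IsIndecomposable f η d s) {g : K[X]} (hg : aeval (d * d) g = s)
    (hm : d ^ m ≠ 0) (hm' : d ^ (m + 1) = 0) (heven : Even m) :
    ∃ M₁ M₂, IsSplitting f η d s M₁ M₂ ⊤ := by
  have hself : LinearMap.IsSelfAdjoint f ⇑(d ^ m) := fun x y => by
    rw [skewAdjoint_pow_apply h.skew_d, heven.neg_one_pow, one_mul]
  obtain ⟨v, hv⟩ := exists_apply_self_ne_zero h2 h.isSymm h.nondegenerate hself hm
  refine h.exists_isSplitting_top_of_disjoint h2 hindec (v := v) (by rintro rfl; simp at hv) ?_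
  rw [h.bicycSub_self_eq_cycSub hg]
  refine disjoint_orthogonal_of_pow_succ_eq_zero h.skew_d hm'
    (span_singleton_sup_map_cycSub d v) fun x hx hx' => ?_
  obtain ⟨a, rfl⟩ := Submodule.mem_span_singleton.1 hx
  have ha : a = 0 := by simpa [hv] using hx' v (Submodule.mem_span_singleton_self v)
  rw [ha, zero_smul]

theorem pow_apply_notMem_cycSub_sup_map_η (h : IsReversalTriple f η d s)
    (hK : ¬IsSquare (-1 : K)) {g : K[X]} (hg : aeval (d * d) g = s) (hv : (d ^ m) v ≠ 0)
    (hm : d ^ (m + 1) = 0) (hodd : Odd m) :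
    (d ^ m) v ∉ cycSub s v ⊔ (bicycSub d s v v).map η := by
  rw [h.bicycSub_self_eq_cycSub hg, h.cycSub_s_eq_cycSub_d_mul_d hg]
  intro hmem
  obtain ⟨x, hx, y, hy, hxy⟩ := Submodule.mem_sup.1 hmem
  have hxd : x ∈ cycSub d v := by
    refine cycSub_aeval_le d (X ^ 2) v ?_
    simpa [sq] using hx
  have hyd : y ∈ cycSub d v := by
    rw [← eq_sub_iff_add_eq'] at hxy
    rw [hxy]
    exact sub_mem (mem_cycSub_iff.2 ⟨X ^ m, by simp⟩) hxd
  have hy0 : y = 0 := Submodule.disjoint_def.1 (h.disjoint_cycSub_map_η hK hm hv) y hyd hy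
  rw [hy0, add_zero] at hxy
  exact pow_apply_notMem_cycSub_mul_self hm hv hodd (hxy ▸ hx)

theorem exists_isSplitting_top_of_odd [FiniteDimensional K V] (h : IsReversalTriple f η d s)
    (hK : ¬IsSquare (-1 : K)) (hindec : IsIndecomposable f η d s) {g : K[X]}
    (hg : aeval (d * d) g = s) (hm : d ^ m ≠ 0) (hm' : d ^ (m + 1) = 0) (hodd : Odd m) :
    ∃ M₁ M₂, IsSplitting f η d s M₁ M₂ ⊤ := by
  have h2 := two_ne_zero_of_not_isSquare_neg_one hK
  obtain ⟨v, hv⟩ : ∃ v, (d ^ m) v ≠ 0 := by simpa [LinearMap.ext_iff] using hm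
  obtain ⟨w, hw, hwv⟩ := exists_mem_orthogonal_ne_zero h.isSymm h.nondegenerate
    (h.pow_apply_notMem_cycSub_sup_map_η hK hg hv hm' hodd)
  rw [orthogonal_sup] at hw
  refine h.exists_isSplitting_top_of_disjoint_sup h2 hindec (v := v) (by rintro rfl; simp at hv)
    hw.1 hw.2 ?_
  rw [h.bicycSub_self_eq_cycSub hg, h.bicycSub_self_eq_cycSub hg]
  have hgen : (Submodule.span K {v} ⊔ Submodule.span K {w}) ⊔ (cycSub d v ⊔ cycSub d w).map d =
      cycSub d v ⊔ cycSub d w := by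
    rw [Submodule.map_sup, sup_sup_sup_comm, span_singleton_sup_map_cycSub,
      span_singleton_sup_map_cycSub]
  refine disjoint_orthogonal_of_pow_succ_eq_zero h.skew_d hm' hgen fun x hx hx' => ?_
  -- The form `(x, y) ↦ f x (dᵐ y)` is alternating, with `v, w` a hyperbolic pair up to scaling.
  have skew_pow (x y : V) : f x ((d ^ m) y) = -f y ((d ^ m) x) := by
    rw [← h.isSymm.eq, skewAdjoint_pow_apply h.skew_d, hodd.neg_one_pow, neg_one_mul]
  have hww : f w ((d ^ m) w) = 0 :=
    (mul_eq_zero.1 (by linear_combination skew_pow w w : 2 * f w ((d ^ m) w) = 0)).resolve_left h2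
  obtain ⟨_, hxv, _, hxw, rfl⟩ := Submodule.mem_sup.1 hx
  obtain ⟨a, rfl⟩ := Submodule.mem_span_singleton.1 hxv
  obtain ⟨b, rfl⟩ := Submodule.mem_span_singleton.1 hxw
  have ha : a = 0 := by
    simpa [hww, hwv] using hx' w (Submodule.mem_sup_right (Submodule.mem_span_singleton_self w))
  have hb : b = 0 := by
    simpa [ha, skew_pow v w, hwv] using
      hx' v (Submodule.mem_sup_left (Submodule.mem_span_singleton_self v))
  simp [ha, hb]

end IsReversalTriple

end NilpotentCase

section ExistenceOfSplittings

theorem IsIndecomposable.exists_isSplitting_top [FiniteDimensional K V] [Nontrivial V]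
    {f : LinearMap.BilinForm K V} {η d s : Module.End K V} (h : IsReversalTriple f η d s)
    (hK : ¬IsSquare (-1 : K)) (hindec : IsIndecomposable f η d s) :
    ∃ M₁ M₂, IsSplitting f η d s M₁ M₂ ⊤ := by
  have h2 := two_ne_zero_of_not_isSquare_neg_one hK
  obtain ⟨p, hp, hker⟩ := exists_irreducible_ker_aeval_ne_bot s
  have hnil : IsNilpotent (aeval s p) := hindec.isNilpotent h hker
  by_cases hdvd : p ∣ X ^ 2 - C 4
  · obtain ⟨c, hc, hs⟩ := exists_isNilpotent_sub_algebraMap hp hnil hdvd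
    obtain ⟨g, hg⟩ := h.exists_aeval_d_mul_d_eq h2 hc hs
    obtain ⟨m, hm, hm'⟩ := exists_pow_ne_zero_of_isNilpotent (h.isNilpotent_d hc hs)
    obtain heven | hodd := m.even_or_odd
    · exact h.exists_isSplitting_top_of_even h2 hindec hg hm hm' heven
    · exact h.exists_isSplitting_top_of_odd hK hindec hg hm hm' hodd
  · exact h.exists_isSplitting_top_of_not_dvd h2 hindec hp hnil hdvd

theorem IsReversalTriple.exists_isSplitting_top [FiniteDimensional K V]
    {f : LinearMap.BilinForm K V} {η d s : Module.End K V} (h : IsReversalTriple f η d s)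
    (hK : ¬IsSquare (-1 : K)) : ∃ M₁ M₂, IsSplitting f η d s M₁ M₂ ⊤ := by
  induction hn : finrank K V using Nat.strong_induction_on generalizing V with
  | _ n ih =>
  subst hn
  obtain hV | hV := subsingleton_or_nontrivial V
  · exact ⟨⊥, ⊥, Subsingleton.elim (⊥ : Submodule K V) ⊤ ▸ isSplitting_bot⟩
  by_cases hindec : IsIndecomposable f η d s
  · exact hindec.exists_isSplitting_top h hK
  obtain ⟨W, hW, hdisj, hbot, htop⟩ : ∃ W ∈ invtSubmodules η d s,
      Disjoint W (f.orthogonal W) ∧ W ≠ ⊥ ∧ W ≠ ⊤ := by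
    simpa [IsIndecomposable] using hindec
  have hcompl : IsCompl W (f.orthogonal W) :=
    (LinearMap.BilinForm.isCompl_orthogonal_iff_disjoint h.isSymm.isRefl).2 hdisj
  have hsplit {U : Submodule K V} (hU : U ∈ invtSubmodules η d s)
      (hUdisj : Disjoint U (f.orthogonal U)) (hUtop : U ≠ ⊤) :
      ∃ M₁ M₂, IsSplitting f η d s M₁ M₂ U := by
    obtain ⟨M₁, M₂, hM⟩ := ih _ (Submodule.finrank_lt hUtop) (h.restrict hU hUdisj) rfl
    exact ⟨_, _, hM.map_subtype hU⟩
  have horth : f.orthogonal (f.orthogonal W) = W :=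
    LinearMap.BilinForm.orthogonal_orthogonal h.nondegenerate h.isSymm.isRefl W
  obtain ⟨M₁, M₂, hM⟩ := hsplit hW hdisj htop
  obtain ⟨M₁', M₂', hM'⟩ := hsplit (orthogonal_mem_invtSubmodules h hW)
    (horth.symm ▸ hdisj.symm) (fun htop' => hbot (by simpa [htop'] using hdisj))
  exact ⟨_, _, hcompl.sup_eq_top ▸ hM.sup h.isSymm horth.ge hM'⟩

end ExistenceOfSplittings

section SplitInvolutions

variable {f : LinearMap.BilinForm K V} {A B : Submodule K V} {g η : Module.End K V}

theorem involutive_projection_sub_projection (h : IsCompl A B) :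
    Function.Involutive (A.projection B h - B.projection A h.symm) := by
  intro x
  obtain ⟨a, b, ha, hb, rfl⟩ := Submodule.codisjoint_iff_exists_add_eq.1 h.codisjoint x
  simp [Submodule.projection_apply_of_mem_left, Submodule.projection_apply_of_mem_right, ha, hb]

/-- The involution of `V = A ⊕ B` that is `1` on `A` and `-1` on `B`. -/
noncomputable def splitInvolution (h : IsCompl A B) : V ≃ₗ[K] V :=
  LinearEquiv.ofInvolutive (A.projection B h - B.projection A h.symm)
    (involutive_projection_sub_projection h)

theorem splitInvolution_add (h : IsCompl A B) {a b : V} (ha : a ∈ A) (hb : b ∈ B) :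
    splitInvolution h (a + b) = a - b := by
  rw [splitInvolution, LinearEquiv.coe_ofInvolutive]
  simp [Submodule.projection_apply_of_mem_left, Submodule.projection_apply_of_mem_right, ha, hb]

theorem splitInvolution_sq (h : IsCompl A B) : splitInvolution h ^ 2 = 1 :=
  LinearEquiv.ext (involutive_projection_sub_projection h)

theorem splitInvolution_mem_orthGroup (hf : f.IsSymm) (h : IsCompl A B)
    (hAB : A ≤ f.orthogonal B) : splitInvolution h ∈ orthGroup f := by
  intro x y
  obtain ⟨a, b, ha, hb, rfl⟩ := Submodule.codisjoint_iff_exists_add_eq.1 h.codisjoint x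
  obtain ⟨a', b', ha', hb', rfl⟩ := Submodule.codisjoint_iff_exists_add_eq.1 h.codisjoint y
  have hba' : f b a' = 0 := hAB ha' b hb
  have hab' : f a b' = 0 := (le_orthogonal_comm hf).1 hAB hb' a ha
  rw [splitInvolution_add h ha hb, splitInvolution_add h ha' hb']
  simp [hba', hab']

theorem sup_mem_invtSubmodule_splitInvolution (h : IsCompl A B) {A' B' : Submodule K V}
    (hA : A' ≤ A) (hB : B' ≤ B) :
    A' ⊔ B' ∈ End.invtSubmodule (splitInvolution h : Module.End K V) := by
  intro x hx
  obtain ⟨a, ha, b, hb, rfl⟩ := Submodule.mem_sup.1 hx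
  change splitInvolution h (a + b) ∈ A' ⊔ B'
  rw [splitInvolution_add h (hA ha) (hB hb)]
  exact sub_mem (Submodule.mem_sup_left ha) (Submodule.mem_sup_right hb)

theorem splitInvolution_apply_comm (h : IsCompl A B) (hA : A ∈ End.invtSubmodule g)
    (hB : B ∈ End.invtSubmodule g) (x : V) :
    splitInvolution h (g x) = g (splitInvolution h x) := by
  obtain ⟨a, b, ha, hb, rfl⟩ := Submodule.codisjoint_iff_exists_add_eq.1 h.codisjoint x
  rw [map_add, splitInvolution_add h (hA ha) (hB hb), splitInvolution_add h ha hb, map_sub]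

theorem splitInvolution_apply_anticomm (h : IsCompl A B) (hA : A ≤ B.comap g)
    (hB : B ≤ A.comap g) (x : V) : splitInvolution h (g x) = -g (splitInvolution h x) := by
  obtain ⟨a, b, ha, hb, rfl⟩ := Submodule.codisjoint_iff_exists_add_eq.1 h.codisjoint x
  rw [map_add, add_comm, splitInvolution_add h (hB hb) (hA ha), splitInvolution_add h ha hb,
    map_sub, neg_sub]

theorem projection_add_mul_projection_sub (h : IsCompl A B) (hη : η * η = -1)
    (hB : B ∈ End.invtSubmodule η) :
    (A.projection B h + η * B.projection A h.symm) *
      (A.projection B h - η * B.projection A h.symm) = 1 := by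
  ext x
  obtain ⟨a, b, ha, hb, rfl⟩ := Submodule.codisjoint_iff_exists_add_eq.1 h.codisjoint x
  have hηη : η (η b) = -b := LinearMap.congr_fun hη b
  have hηb : η b ∈ B := hB hb
  simp [Submodule.projection_apply_of_mem_left, Submodule.projection_apply_of_mem_right, ha, hb,
    hηb, hηη]

theorem projection_sub_mul_projection_add (h : IsCompl A B) (hη : η * η = -1)
    (hB : B ∈ End.invtSubmodule η) :
    (A.projection B h - η * B.projection A h.symm) *
      (A.projection B h + η * B.projection A h.symm) = 1 := by
  have hnegB : B ∈ End.invtSubmodule (-η) := fun x hx => B.neg_mem (x := η x) (hB hx)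
  have hnegη : -η * -η = -1 := by rw [neg_mul_neg, hη]
  simpa [sub_eq_add_neg] using projection_add_mul_projection_sub h hnegη hnegB

/-- The square root of `splitInvolution h` that is `1` on `A` and acts on `B` as the complex
structure `η`. -/
noncomputable def splitQuarterTurn (h : IsCompl A B) (hη : η * η = -1)
    (hB : B ∈ End.invtSubmodule η) : V ≃ₗ[K] V :=
  LinearEquiv.ofLinearMap (A.projection B h + η * B.projection A h.symm)
    (A.projection B h - η * B.projection A h.symm) (projection_add_mul_projection_sub h hη hB)
    (projection_sub_mul_projection_add h hη hB)

theorem splitQuarterTurn_add (h : IsCompl A B) (hη : η * η = -1) (hB : B ∈ End.invtSubmodule η)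
    {a b : V} (ha : a ∈ A) (hb : b ∈ B) : splitQuarterTurn h hη hB (a + b) = a + η b := by
  rw [splitQuarterTurn, LinearEquiv.coe_ofLinearMap]
  simp [Submodule.projection_apply_of_mem_left, Submodule.projection_apply_of_mem_right, ha, hb]

theorem splitQuarterTurn_mul_self (h : IsCompl A B) (hη : η * η = -1)
    (hB : B ∈ End.invtSubmodule η) :
    splitQuarterTurn h hη hB * splitQuarterTurn h hη hB = splitInvolution h := by
  ext x
  obtain ⟨a, b, ha, hb, rfl⟩ := Submodule.codisjoint_iff_exists_add_eq.1 h.codisjoint x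
  have hηη : η (η b) = -b := LinearMap.congr_fun hη b
  rw [LinearEquiv.mul_apply, splitQuarterTurn_add h hη hB ha hb,
    splitQuarterTurn_add h hη hB ha (hB hb), splitInvolution_add h ha hb, hηη, sub_eq_add_neg]

theorem splitQuarterTurn_mem_orthGroup (hf : f.IsSymm) (h : IsCompl A B)
    (hAB : A ≤ f.orthogonal B) (hskew : f.IsSkewAdjoint η) (hη : η * η = -1)
    (hB : B ∈ End.invtSubmodule η) : splitQuarterTurn h hη hB ∈ orthGroup f := by
  intro x y
  obtain ⟨a, b, ha, hb, rfl⟩ := Submodule.codisjoint_iff_exists_add_eq.1 h.codisjoint x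
  obtain ⟨a', b', ha', hb', rfl⟩ := Submodule.codisjoint_iff_exists_add_eq.1 h.codisjoint y
  have hBA : B ≤ f.orthogonal A := (le_orthogonal_comm hf).1 hAB
  have hba' : f b a' = 0 := hAB ha' b hb
  have hab' : f a b' = 0 := hBA hb' a ha
  have hηba' : f (η b) a' = 0 := hAB ha' _ (hB hb)
  have haηb' : f a (η b') = 0 := hBA (hB hb') a ha
  have hbb' : f (η b) (η b') = f b b' := by
    rw [skewAdjoint_apply hskew, ← Module.End.mul_apply, hη]
    simp
  rw [splitQuarterTurn_add h hη hB ha hb, splitQuarterTurn_add h hη hB ha' hb']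
  simp [hba', hab', hηba', haηb', hbb']

theorem splitInvolution_mem_omegaGroup (hf : f.IsSymm) (h : IsCompl A B)
    (hAB : A ≤ f.orthogonal B) (hskew : f.IsSkewAdjoint η) (hη : η * η = -1)
    (hB : B ∈ End.invtSubmodule η) {γ : V ≃ₗ[K] V} (hγ : γ ∈ orthGroup f)
    (hγA : A ∈ End.invtSubmodule (γ : Module.End K V))
    (hγB : B ∈ End.invtSubmodule (γ : Module.End K V)) (hγη : ∀ x, γ (η x) = -η (γ x)) :
    splitInvolution h ∈ omegaGroup f := by
  set J := splitQuarterTurn h hη hB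
  have hJγJ : J * γ * J = γ := by
    ext x
    obtain ⟨a, b, ha, hb, rfl⟩ := Submodule.codisjoint_iff_exists_add_eq.1 h.codisjoint x
    have hηη : η (η (γ b)) = -γ b := LinearMap.congr_fun hη _
    calc J (γ (J (a + b))) = J (γ a + γ (η b)) := by
          rw [splitQuarterTurn_add h hη hB ha hb, map_add]
      _ = γ a + η (γ (η b)) := splitQuarterTurn_add h hη hB (hγA ha) (hγB (hB hb))
      _ = γ (a + b) := by rw [hγη, map_neg, hηη, neg_neg, map_add]
  have hcomm : J * γ * J⁻¹ * γ⁻¹ = splitInvolution h := by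
    rw [← splitQuarterTurn_mul_self h hη hB, mul_inv_eq_iff_eq_mul,
      mul_inv_eq_iff_eq_mul, mul_assoc, mul_assoc, ← mul_assoc J γ, hJγJ]
  rw [← hcomm]
  exact Subgroup.commutator_mem_commutator
    (splitQuarterTurn_mem_orthGroup hf h hAB hskew hη hB) hγ

end SplitInvolutions

section ReversingInvolutions

variable {f : LinearMap.BilinForm K V} {η d s : Module.End K V} {M₁ M₂ : Submodule K V}

namespace IsSplitting

theorem sup_map_le_orthogonal (h : IsReversalTriple f η d s) (hM : IsSplitting f η d s M₁ M₂ ⊤) :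
    M₁ ⊔ M₁.map η ≤ f.orthogonal (M₂ ⊔ M₂.map η) := by
  have hη := hM.map_le_orthogonal
  rw [Submodule.map_sup, orthogonal_sup] at hη
  obtain ⟨hη₁, hη₂⟩ := sup_le_iff.1 hη
  rw [orthogonal_sup]
  refine sup_le (le_inf hM.le_orthogonal ?_) (le_inf (hη₁.trans inf_le_right) ?_)
  · exact (le_orthogonal_comm h.isSymm).1 (hη₂.trans inf_le_left)
  · rw [map_le_orthogonal_comm h.isSymm h.skew_η, h.map_η_map_η]
    exact (le_orthogonal_comm h.isSymm).1 hM.le_orthogonal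

theorem isCompl_sup_map (h : IsReversalTriple f η d s) (hM : IsSplitting f η d s M₁ M₂ ⊤) :
    IsCompl (M₁ ⊔ M₁.map η) (M₂ ⊔ M₂.map η) :=
  isCompl_of_le_orthogonal h.isSymm h.nondegenerate (hM.sup_map_le_orthogonal h)
    (by rw [sup_sup_sup_comm, ← Submodule.map_sup, hM.sup_map_eq])

theorem isCompl_map (h : IsReversalTriple f η d s) (hM : IsSplitting f η d s M₁ M₂ ⊤) :
    IsCompl (M₁ ⊔ M₂) ((M₁ ⊔ M₂).map η) :=
  isCompl_of_le_orthogonal h.isSymm h.nondegenerate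
    ((le_orthogonal_comm h.isSymm).1 hM.map_le_orthogonal) hM.sup_map_eq

theorem splitInvolution_mem_omegaGroup (h : IsReversalTriple f η d s)
    (hM : IsSplitting f η d s M₁ M₂ ⊤) :
    splitInvolution (hM.isCompl_sup_map h) ∈ omegaGroup f := by
  have hN := hM.isCompl_map h
  have hηη : (M₁ ⊔ M₂).map η ≤ (M₁ ⊔ M₂).comap η :=
    Submodule.map_le_iff_le_comap.1 (h.map_η_map_η _).le
  exact Biref.splitInvolution_mem_omegaGroup h.isSymm _ (hM.sup_map_le_orthogonal h) h.skew_η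
    h.η_mul_η (h.sup_map_η_mem_invtSubmodule_η M₂)
    (splitInvolution_mem_orthGroup h.isSymm hN
      ((le_orthogonal_comm h.isSymm).1 hM.map_le_orthogonal))
    (sup_mem_invtSubmodule_splitInvolution hN le_sup_left (Submodule.map_mono le_sup_left))
    (sup_mem_invtSubmodule_splitInvolution hN le_sup_right (Submodule.map_mono le_sup_right))
    (splitInvolution_apply_anticomm hN (Submodule.le_comap_map η _) hηη)

end IsSplitting

namespace IsReversalTriple

theorem sup_map_η_le_comap_d (h : IsReversalTriple f η d s) (hM : M₁ ≤ M₂.comap d) :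
    M₁ ⊔ M₁.map η ≤ (M₂ ⊔ M₂.map η).comap d :=
  sup_le (hM.trans (Submodule.comap_mono le_sup_left))
    ((h.map_η_le_comap_d hM).trans (Submodule.comap_mono le_sup_right))

theorem exists_involution_mem_omegaGroup [FiniteDimensional K V] (h : IsReversalTriple f η d s)
    (hK : ¬IsSquare (-1 : K)) :
    ∃ σ ∈ omegaGroup f, σ ^ 2 = 1 ∧ (∀ x, σ (s x) = s (σ x)) ∧ ∀ x, σ (d x) = -d (σ x) := by
  obtain ⟨M₁, M₂, hM⟩ := h.exists_isSplitting_top hK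
  have hs {M : Submodule K V} (hMs : M ∈ End.invtSubmodule s) :=
    End.invtSubmodule.sup_mem hMs (h.map_η_mem_invtSubmodule_s hMs)
  exact ⟨_, hM.splitInvolution_mem_omegaGroup h, splitInvolution_sq _,
    splitInvolution_apply_comm _ (hs hM.invt_left) (hs hM.invt_right),
    splitInvolution_apply_anticomm _ (h.sup_map_η_le_comap_d hM.left_le_comap)
      (h.sup_map_η_le_comap_d hM.right_le_comap)⟩

end IsReversalTriple

theorem isReversalTriple_of_conj_eq_inv (hsymm : f.IsSymm) (hnd : f.Nondegenerate)
    {φ η : V ≃ₗ[K] V} (hφ : φ ∈ orthGroup f) (hη : η ∈ orthGroup f) (hη2 : ∀ v, η (η v) = -v)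
    (hrev : η * φ * η⁻¹ = φ⁻¹) :
    IsReversalTriple f (η : Module.End K V) ((φ : Module.End K V) - (φ.symm : Module.End K V))
      ((φ : Module.End K V) + (φ.symm : Module.End K V)) := by
  have η_φ (x : V) : η (φ x) = φ.symm (η x) :=
    LinearEquiv.congr_fun (mul_inv_eq_iff_eq_mul.1 hrev) x
  have η_φ_symm (x : V) : η (φ.symm x) = φ (η x) := by
    rw [← φ.symm_apply_eq, ← η_φ, φ.apply_symm_apply]
  have adjoint (x y : V) : f (φ x) y = f x (φ.symm y) := by
    rw [← hφ x, φ.apply_symm_apply]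
  have adjoint_symm (x y : V) : f (φ.symm x) y = f x (φ y) := by
    rw [← hφ _ y, φ.apply_symm_apply]
  exact {
    isSymm := hsymm
    nondegenerate := hnd
    skew_η := fun x y => by
      have := hη x (η y)
      rw [hη2, map_neg] at this
      simp [← this]
    skew_d := fun x y => by simp [adjoint, adjoint_symm]
    selfAdjoint_s := fun x y => by simp [adjoint, adjoint_symm, add_comm]
    η_mul_η := by ext x; simp [hη2]
    η_mul_d := by ext x; simp [η_φ, η_φ_symm]
    commute_η_s := by ext x; simp [η_φ, η_φ_symm, add_comm]
    commute_d_s := by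
      ext x
      simp only [End.mul_apply, LinearMap.add_apply, LinearMap.sub_apply, LinearEquiv.coe_coe,
        map_add, map_sub, LinearEquiv.apply_symm_apply, LinearEquiv.symm_apply_apply]
      abel
    d_mul_d := by
      ext x
      simp only [End.mul_apply, LinearMap.add_apply, LinearMap.sub_apply, LinearEquiv.coe_coe,
        map_add, map_sub, LinearEquiv.apply_symm_apply, LinearEquiv.symm_apply_apply,
        End.ofNat_apply]
      abel }

theorem isBireflectionalIn_of_mul_eq_inv_mul {G : Type*} [Group G] {H : Subgroup G} {σ g : G}
    (hσ : σ ∈ H) (hg : g ∈ H) (hσσ : σ ^ 2 = 1) (hrev : σ * g = g⁻¹ * σ) :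
    IsBireflectionalIn H g := by
  refine ⟨σ, σ * g, hσ, mul_mem hσ hg, hσσ, ?_, ?_⟩
  · calc (σ * g) ^ 2 = g⁻¹ * (σ * σ) * g := by rw [sq]; nth_rw 1 [hrev]; group
      _ = 1 := by rw [← sq, hσσ, mul_one, inv_mul_cancel]
  · rw [← mul_assoc, ← sq, hσσ, one_mul]

end ReversingInvolutions

theorem stmt7_general [FiniteDimensional K V] (hK : ¬IsSquare (-1 : K))
    (f : LinearMap.BilinForm K V) (hsymm : f.IsSymm) (hnd : f.Nondegenerate)
    (φ : V ≃ₗ[K] V) (hφ : φ ∈ omegaGroup f)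
    (η : V ≃ₗ[K] V) (hη : η ∈ orthGroup f) (hη2 : ∀ v : V, η (η v) = -v)
    (hrev : η * φ * η⁻¹ = φ⁻¹) :
    IsBireflectionalIn (omegaGroup f) φ := by
  have hφO : φ ∈ orthGroup f := Subgroup.commutator_le_self _ hφ
  obtain ⟨σ, hσ, hσσ, hs, hd⟩ :=
    (isReversalTriple_of_conj_eq_inv hsymm hnd hφO hη hη2 hrev).exists_involution_mem_omegaGroup hK
  refine isBireflectionalIn_of_mul_eq_inv_mul hσ hφ hσσ (LinearEquiv.ext fun x => ?_)
  have hadd : σ (φ x) + σ (φ.symm x) = φ (σ x) + φ.symm (σ x) := by simpa using hs x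
  have hsub : σ (φ x) - σ (φ.symm x) = φ.symm (σ x) - φ (σ x) := by simpa using hd x
  refine smul_right_injective V (two_ne_zero_of_not_isSquare_neg_one hK) ?_
  change (2 : K) • σ (φ x) = (2 : K) • φ.symm (σ x)
  linear_combination (norm := module) hadd + hsub

/-- For `K = GF(q)`, `q ≡ 3 (mod 4)`: if `φ ∈ Ω(V)` is reversed by some
`η ∈ O(V)` with `η² = -id`, then `φ` is bireflectional in `Ω(V)`. -/
theorem stmt7 [Fintype K] {q : ℕ} (hq : Fintype.card K = q) (h3 : q % 4 = 3)
    [FiniteDimensional K V]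
    (f : LinearMap.BilinForm K V) (hsymm : f.IsSymm) (hnd : f.Nondegenerate)
    (φ : V ≃ₗ[K] V) (hφ : φ ∈ omegaGroup f)
    (η : V ≃ₗ[K] V) (hη : η ∈ orthGroup f) (hη2 : ∀ v : V, η (η v) = -v)
    (hrev : η * φ * η⁻¹ = φ⁻¹) :
    IsBireflectionalIn (omegaGroup f) φ :=
  stmt7_general (by simp [FiniteField.isSquare_neg_one_iff, hq, h3]) f hsymm hnd φ hφ η hη hη2 hrev

end Biref
end

section
/- Let (V, f) be a finite-dimensional nondegenerate symmetric bilinear space over a field K with char K ≠ 2, and let φ ∈ O(V) be orthogonally indecomposable, indecomposable as a K[x]-module (x acting as φ), with minimal polynomial (x − 1)^{dim V}, and dim V ≥ 3. Then Fix(φ) ⊆ Bahn(φ), f induces a nondegenerate symmetric bilinear form on the quotient Bahn(φ)/Fix(φ), and disc V = −disc(Bahn(φ)/Fix(φ)) in K*/(K*)². -/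
open Polynomial Module

namespace Biref

variable {K V : Type*} [Field K] [AddCommGroup V] [Module K V]

/-!
Since `φ` is an isometry, `Fix(φ) = Bahn(φ)^⊥`. A minimal polynomial of full degree makes `φ - 1`
a single nilpotent Jordan block, so `Fix(φ)` is a line, and it lies in `Bahn(φ)`; hence it is
isotropic.

For any totally isotropic subspace `W` of a nondegenerate space, a basis of `W`, a family dual to
it, and lifts of a basis of `W^⊥ / W` together form a basis of `V`. In its Gram matrix the first two
parts span a block `[[0, 1], [1, *]]` of determinant `(-1) ^ dim W`, and the lifts are orthogonal to
`W`, so `disc V = (-1) ^ dim W * disc (W^⊥ / W)`. Here `dim W = 1`.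
-/

section GramMatrix

variable {ι : Type*} (f : LinearMap.BilinForm K V)

/-- The Gram matrix of a family of vectors, which need not be a basis; for a basis it is
`LinearMap.BilinForm.toMatrix` (see `gramMatrix_basis`). -/
def gramMatrix (v : ι → V) : Matrix ι ι K :=
  Matrix.of fun i j => f (v i) (v j)

@[simp]
theorem gramMatrix_apply (v : ι → V) (i j : ι) : gramMatrix f v i j = f (v i) (v j) := rfl

variable [Fintype ι] [DecidableEq ι]

theorem gramMatrix_basis (b : Basis ι K V) :
    gramMatrix f b = LinearMap.BilinForm.toMatrix b f := by
  ext i j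
  rw [gramMatrix_apply, LinearMap.BilinForm.toMatrix_apply]

theorem exists_det_gramMatrix_eq_mul_sq (b b' : Basis ι K V) :
    ∃ c : Kˣ, (gramMatrix f b').det = (gramMatrix f b).det * (c : K) ^ 2 := by
  obtain ⟨c, hc⟩ : IsUnit (b.toMatrix b').det := b.det_apply b' ▸ b.isUnit_det b'
  refine ⟨c, ?_⟩
  rw [gramMatrix_basis, gramMatrix_basis,
    ← LinearMap.BilinForm.toMatrix_mul_basis_toMatrix b b' f, Matrix.det_mul, Matrix.det_mul,
    Matrix.det_transpose, hc]
  ring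

theorem hasDisc_iff_exists_det_gramMatrix (b : Basis ι K V) (d : K) :
    HasDisc f d ↔ ∃ c : Kˣ, (gramMatrix f b).det = d * (c : K) ^ 2 := by
  let e : ι ≃ Fin (finrank K V) := Fintype.equivFinOfCardEq (finrank_eq_card_basis b).symm
  have det_reindex : (gramMatrix f (b.reindex e)).det = (gramMatrix f b).det := by
    rw [← Matrix.det_submatrix_equiv_self e.symm (gramMatrix f b)]
    congr 1
    ext i j
    simp
  constructor
  · rintro ⟨b', c, hb'⟩
    obtain ⟨c', hc'⟩ := exists_det_gramMatrix_eq_mul_sq f b' (b.reindex e)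
    refine ⟨c * c', ?_⟩
    calc (gramMatrix f b).det
      _ = (gramMatrix f b').det * (c' : K) ^ 2 := by rw [← det_reindex, hc']
      _ = d * (c : K) ^ 2 * (c' : K) ^ 2 := congrArg (· * (c' : K) ^ 2) hb'
      _ = d * ((c * c' : Kˣ) : K) ^ 2 := by push_cast; ring
  · rintro ⟨c, hc⟩
    exact ⟨b.reindex e, c, det_reindex.trans hc⟩

theorem linearIndependent_of_det_gramMatrix_ne_zero {v : ι → V}
    (hv : (gramMatrix f v).det ≠ 0) : LinearIndependent K v := by
  rw [Fintype.linearIndependent_iff]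
  intro c hc
  suffices (gramMatrix f v).mulVec c = 0 from
    congrFun (Matrix.eq_zero_of_mulVec_eq_zero hv this)
  ext i
  calc (gramMatrix f v).mulVec c i
    _ = f (v i) (∑ j, c j • v j) := by simp [Matrix.mulVec, dotProduct, mul_comm]
    _ = 0 := by rw [hc, map_zero]

end GramMatrix

section HyperbolicBlock

variable {ι κ R : Type*} [Fintype ι] [DecidableEq ι] [CommRing R]

theorem det_fromBlocks_zero_one_one (X : Matrix ι ι R) :
    (Matrix.fromBlocks 0 (1 : Matrix ι ι R) 1 X).det = (-1) ^ Fintype.card ι := by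
  let E : Matrix (ι ⊕ ι) (ι ⊕ ι) R := Matrix.fromBlocks 1 0 1 1
  have det_E : E.det = 1 := by
    rw [Matrix.det_fromBlocks_zero₁₂, Matrix.det_one, mul_one]
  -- Adding the second block column to the first makes the upper left block invertible.
  have column_operation : Matrix.fromBlocks 0 (1 : Matrix ι ι R) 1 X * E =
      Matrix.fromBlocks 1 1 (1 + X) X := by
    simp [E, Matrix.fromBlocks_multiply]
  calc (Matrix.fromBlocks 0 (1 : Matrix ι ι R) 1 X).det
    _ = (Matrix.fromBlocks 1 1 (1 + X) X).det := by
      rw [← column_operation, Matrix.det_mul, det_E, mul_one]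
    _ = (-1 : Matrix ι ι R).det := by
      rw [Matrix.det_fromBlocks_one₁₁, Matrix.mul_one, sub_add_cancel_right]
    _ = (-1) ^ Fintype.card ι := by rw [Matrix.det_neg, Matrix.det_one, mul_one]

variable [Fintype κ] [DecidableEq κ]

theorem det_fromBlocks_hyperbolic (X : Matrix ι ι R) (Y : Matrix ι κ R) (Z : Matrix κ ι R)
    (D : Matrix κ κ R) :
    (Matrix.fromBlocks (Matrix.fromBlocks 0 (1 : Matrix ι ι R) 1 X) (Matrix.fromRows 0 Y)
      (Matrix.fromCols 0 Z) D).det = (-1) ^ Fintype.card ι * D.det := by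
  let H : Matrix (ι ⊕ ι) (ι ⊕ ι) R := Matrix.fromBlocks 0 1 1 X
  let Hinv : Matrix (ι ⊕ ι) (ι ⊕ ι) R := Matrix.fromBlocks (-X) 1 1 0
  let : Invertible H := ⟨Hinv, by simp [H, Hinv, Matrix.fromBlocks_multiply],
    by simp [H, Hinv, Matrix.fromBlocks_multiply]⟩
  let Y₀ : Matrix (ι ⊕ ι) κ R := Matrix.fromRows 0 Y
  let Z₀ : Matrix κ (ι ⊕ ι) R := Matrix.fromCols 0 Z
  have schur_correction_eq_zero : Z₀ * ⅟H * Y₀ = 0 := by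
    change Z₀ * Hinv * Y₀ = 0
    simp [Hinv, Y₀, Z₀, Matrix.fromCols_mul_fromBlocks, Matrix.fromCols_mul_fromRows]
  rw [Matrix.det_fromBlocks₁₁ H, schur_correction_eq_zero, sub_zero,
    det_fromBlocks_zero_one_one]

theorem det_gramMatrix_sumElim {f : LinearMap.BilinForm K V} (hsymm : f.IsSymm)
    {e e' : ι → V} {w : κ → V} (he : ∀ i j, f (e i) (e j) = 0)
    (hee' : ∀ i j, f (e i) (e' j) = (1 : Matrix ι ι K) i j) (hew : ∀ i j, f (e i) (w j) = 0) :
    (gramMatrix f (Sum.elim (Sum.elim e e') w)).det =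
      (-1) ^ Fintype.card ι * (gramMatrix f w).det := by
  have gram_eq : gramMatrix f (Sum.elim (Sum.elim e e') w) =
      Matrix.fromBlocks (Matrix.fromBlocks 0 1 1 (gramMatrix f e'))
        (Matrix.fromRows 0 (Matrix.of fun i j => f (e' i) (w j)))
        (Matrix.fromCols 0 (Matrix.of fun i j => f (w i) (e' j))) (gramMatrix f w) := by
    ext ((i | i) | i) ((j | j) | j)
    case inl.inr.inl.inl =>
      simpa [Matrix.one_apply, eq_comm] using (hsymm.eq (e' i) (e j)).trans (hee' j i)
    case inr.inl.inl => simpa using (hsymm.eq (w i) (e j)).trans (hew j i)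
    all_goals simp [he, hee', hew]
  rw [gram_eq, det_fromBlocks_hyperbolic]

end HyperbolicBlock

section Reduction

variable {f : LinearMap.BilinForm K V} {U W : Submodule K V}

/-- The bilinear form that `f` induces on `U / (U ∩ W)` when `W` is orthogonal to `U`. The
denominator is spelled as a comap so that `W ≤ U` need not be part of the data. -/
def inducedForm (hsymm : f.IsSymm) (hWU : W ≤ f.orthogonal U) :
    LinearMap.BilinForm K (U ⧸ W.comap U.subtype) :=
  LinearMap.IsRefl.liftQ₂ (f.restrict U) (W.comap U.subtype) (hsymm.restrict U).isRefl
    fun _ hx => LinearMap.ext fun y => hsymm.isRefl _ _ (hWU hx y y.2)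

theorem inducedForm_mk_mk (hsymm : f.IsSymm) (hWU : W ≤ f.orthogonal U) (x y : U) :
    inducedForm hsymm hWU (Submodule.Quotient.mk x) (Submodule.Quotient.mk y) = f x y := rfl

theorem inducedForm_isSymm (hsymm : f.IsSymm) (hWU : W ≤ f.orthogonal U) :
    (inducedForm hsymm hWU).IsSymm := by
  refine ⟨fun x y => ?_⟩
  obtain ⟨x, rfl⟩ := Submodule.Quotient.mk_surjective _ x
  obtain ⟨y, rfl⟩ := Submodule.Quotient.mk_surjective _ y
  exact hsymm.eq x y

theorem inducedForm_nondegenerate (hsymm : f.IsSymm) (hW : W = f.orthogonal U) :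
    (inducedForm hsymm hW.le).Nondegenerate := by
  refine (inducedForm_isSymm hsymm hW.le).isRefl.nondegenerate_iff_separatingLeft.2 fun x hx => ?_
  obtain ⟨x, rfl⟩ := Submodule.Quotient.mk_surjective _ x
  rw [Submodule.Quotient.mk_eq_zero, Submodule.mem_comap, hW]
  exact fun y hy => hsymm.isRefl _ _ (hx (Submodule.Quotient.mk ⟨y, hy⟩))

variable [FiniteDimensional K V]

theorem exists_dual_family (hsymm : f.IsSymm) (hnd : f.Nondegenerate) {ι : Type*} [DecidableEq ι]
    (b : Basis ι K W) :
    ∃ e' : ι → V, ∀ i j, f (b i) (e' j) = (1 : Matrix ι ι K) i j := by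
  choose ψ hψ using fun j => LinearMap.exists_extend (b.coord j)
  refine ⟨fun j => (f.toDual hnd).symm (ψ j), fun i j => ?_⟩
  calc f (b i) ((f.toDual hnd).symm (ψ j))
    _ = f ((f.toDual hnd).symm (ψ j)) (b i) := hsymm.eq _ _
    _ = ψ j (b i) := LinearMap.BilinForm.apply_toDual_symm_apply _ _
    _ = b.coord j (b i) := LinearMap.congr_fun (hψ j) (b i)
    _ = (1 : Matrix ι ι K) i j := by simp [Finsupp.single_apply, Matrix.one_apply]

theorem finrank_add_finrank_add_finrank_quotient (hnd : f.Nondegenerate)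
    (hW : W = f.orthogonal U) (hWU : W ≤ U) :
    finrank K W + finrank K W + finrank K (U ⧸ W.comap U.subtype) = finrank K V := by
  have finrank_comap := (Submodule.comapSubtypeEquivOfLe hWU).finrank_eq
  have finrank_quotient := Submodule.finrank_quotient_add_finrank (W.comap U.subtype)
  have finrank_W : finrank K W = finrank K V - finrank K U :=
    hW ▸ LinearMap.BilinForm.finrank_orthogonal hnd U
  have := U.finrank_le
  omega

theorem exists_basis_det_gramMatrix_eq (hsymm : f.IsSymm) (hnd : f.Nondegenerate)
    (hW : W = f.orthogonal U) (hWU : W ≤ U) {ι κ : Type*} [Fintype ι] [DecidableEq ι] [Fintype κ]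
    [DecidableEq κ] (bW : Basis ι K W) (bQ : Basis κ K (U ⧸ W.comap U.subtype)) :
    ∃ b : Basis ((ι ⊕ ι) ⊕ κ) K V, (gramMatrix f b).det =
      (-1) ^ Fintype.card ι * (gramMatrix (inducedForm hsymm hW.le) bQ).det := by
  obtain ⟨e', he'⟩ := exists_dual_family hsymm hnd bW
  choose w hw using fun i => Submodule.Quotient.mk_surjective _ (bQ i)
  have isotropic (x : W) (y : U) : f x y = 0 := hsymm.isRefl _ _ (hW.le x.2 y y.2)
  have gram_w : gramMatrix f (fun i => (w i : V)) = gramMatrix (inducedForm hsymm hW.le) bQ := by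
    ext i j
    rw [gramMatrix_apply, gramMatrix_apply, ← hw i, ← hw j, inducedForm_mk_mk]
  have det_eq := det_gramMatrix_sumElim hsymm (e := fun i => (bW i : V)) (w := fun i => (w i : V))
    (fun i j => isotropic (bW i) ⟨bW j, hWU (bW j).2⟩) he' (fun i j => isotropic (bW i) (w j))
  rw [gram_w] at det_eq
  have det_ne_zero : (gramMatrix (inducedForm hsymm hW.le) bQ).det ≠ 0 := by
    rw [gramMatrix_basis, ← LinearMap.BilinForm.nondegenerate_iff_det_ne_zero]
    exact inducedForm_nondegenerate hsymm hW
  have independent := linearIndependent_of_det_gramMatrix_ne_zero f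
    (det_eq ▸ mul_ne_zero (pow_ne_zero _ (neg_ne_zero.2 one_ne_zero)) det_ne_zero)
  have card_eq : Fintype.card ((ι ⊕ ι) ⊕ κ) = finrank K V := by
    rw [Fintype.card_sum, Fintype.card_sum, ← finrank_eq_card_basis bW,
      ← finrank_eq_card_basis bQ, finrank_add_finrank_add_finrank_quotient hnd hW hWU]
  exact ⟨basisOfLinearIndependentOfCardEqFinrank' _ independent card_eq,
    by rw [coe_basisOfLinearIndependentOfCardEqFinrank', det_eq]⟩

theorem hasDisc_inducedForm_iff (hsymm : f.IsSymm) (hnd : f.Nondegenerate)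
    (hW : W = f.orthogonal U) (hWU : W ≤ U) (d : K) :
    HasDisc (inducedForm hsymm hW.le) d ↔ HasDisc f ((-1) ^ finrank K W * d) := by
  let bQ := finBasis K (U ⧸ W.comap U.subtype)
  obtain ⟨b, hb⟩ := exists_basis_det_gramMatrix_eq hsymm hnd hW hWU (finBasis K W) bQ
  rw [hasDisc_iff_exists_det_gramMatrix _ bQ, hasDisc_iff_exists_det_gramMatrix f b, hb,
    Fintype.card_fin]
  simp only [mul_assoc, mul_right_inj' (pow_ne_zero _ (neg_ne_zero.2 (one_ne_zero (α := K))))]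

end Reduction

theorem ker_sub_one_eq_orthogonal_range_sub_one {f : LinearMap.BilinForm K V}
    (hnd : f.Nondegenerate) {φ : V ≃ₗ[K] V} (hφ : φ ∈ orthGroup f) :
    LinearMap.ker ((φ : V →ₗ[K] V) - 1) =
      f.orthogonal (LinearMap.range ((φ : V →ₗ[K] V) - 1)) := by
  -- `f (φ z - z) x = f (φ z) (x - φ x)`, and `φ z` runs through all of `V`.
  have key (x z : V) : f (φ z - z) x = f (φ z) (x - φ x) := by
    rw [map_sub, map_sub, LinearMap.sub_apply, hφ z x]
  ext x
  rw [LinearMap.mem_ker, LinearMap.BilinForm.mem_orthogonal_iff]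
  change φ x - x = 0 ↔ _
  constructor
  · rintro hx _ ⟨z, rfl⟩
    exact (key x z).trans (by rw [← neg_sub, hx, neg_zero, map_zero])
  · intro hx
    rw [← neg_sub, neg_eq_zero]
    refine hnd.2 _ fun y => ?_
    obtain ⟨z, rfl⟩ := φ.surjective y
    exact (key x z).symm.trans (hx _ ⟨z, rfl⟩)

section Nilpotent

theorem nilpotencyClass_sub_algebraMap_of_minpoly_eq {A : Type*} [Ring A] [Algebra K A] {x : A}
    {a : K} {k : ℕ} (h : minpoly K x = (X - C a) ^ k) :
    nilpotencyClass (x - algebraMap K A a) = k := by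
  have pow_eq_zero_iff (j : ℕ) : (x - algebraMap K A a) ^ j = 0 ↔ k ≤ j := by
    rw [← pow_dvd_pow_iff (X_sub_C_ne_zero a) (not_isUnit_X_sub_C a), ← h, minpoly.dvd_iff]
    simp
  simp only [nilpotencyClass, pow_eq_zero_iff]
  exact csInf_Ici

variable {N : Module.End K V}

theorem nilpotencyClass_le_nilpotencyClass_restrict_range_add_one (hN : IsNilpotent N) :
    nilpotencyClass N ≤ nilpotencyClass (N.restrict fun x (_ : x ∈ LinearMap.range N) =>
      LinearMap.mem_range_self N x) + 1 := by
  set T := N.restrict fun x (_ : x ∈ LinearMap.range N) => LinearMap.mem_range_self N x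
  have hT : IsNilpotent T := Module.End.isNilpotent.restrict _ hN
  refine Nat.sInf_le (LinearMap.ext fun x => ?_)
  have := congrArg Subtype.val
    (LinearMap.congr_fun (pow_nilpotencyClass hT) ⟨N x, LinearMap.mem_range_self N x⟩)
  rw [Module.End.pow_restrict] at this
  simpa [pow_succ] using this

theorem ker_le_range_of_two_le_nilpotencyClass (hN : 2 ≤ nilpotencyClass N)
    (hker : finrank K (LinearMap.ker N) = 1) : LinearMap.ker N ≤ LinearMap.range N := by
  obtain ⟨k, hk⟩ := Nat.exists_eq_add_of_le' hN
  obtain ⟨pow_eq_zero, pow_ne_zero⟩ := nilpotencyClass_eq_succ_iff.1 hk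
  have range_pow_le_ker : LinearMap.range (N ^ (k + 1)) ≤ LinearMap.ker N := by
    rw [LinearMap.range_le_ker_iff, ← Module.End.mul_eq_comp, ← pow_succ', pow_eq_zero]
  have : FiniteDimensional K (LinearMap.ker N) := .of_finrank_pos (hker ▸ one_pos)
  have range_pow_eq_ker : LinearMap.range (N ^ (k + 1)) = LinearMap.ker N := by
    refine Submodule.eq_of_le_of_finrank_le range_pow_le_ker ?_
    have := Submodule.finiteDimensional_of_le range_pow_le_ker
    rw [hker, Submodule.one_le_finrank_iff]
    exact mt LinearMap.range_eq_bot.1 pow_ne_zero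
  rw [← range_pow_eq_ker, pow_succ']
  exact LinearMap.range_comp_le_range _ _

variable [FiniteDimensional K V]

theorem nilpotencyClass_le_finrank (hN : IsNilpotent N) : nilpotencyClass N ≤ finrank K V := by
  refine Nat.sInf_le ?_
  have := N.aeval_self_charpoly
  rwa [hN.charpoly_eq_X_pow_finrank, map_pow, aeval_X] at this

theorem finrank_ker_eq_one_of_nilpotencyClass_eq_finrank [Nontrivial V]
    (hN : nilpotencyClass N = finrank K V) : finrank K (LinearMap.ker N) = 1 := by
  have nilpotent : IsNilpotent N :=
    isNilpotent_of_pos_nilpotencyClass (hN ▸ finrank_pos)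
  have le_finrank_range : finrank K V ≤ finrank K (LinearMap.range N) + 1 :=
    calc finrank K V
      _ = nilpotencyClass N := hN.symm
      _ ≤ _ := nilpotencyClass_le_nilpotencyClass_restrict_range_add_one nilpotent
      _ ≤ finrank K (LinearMap.range N) + 1 := by
        gcongr
        exact nilpotencyClass_le_finrank (Module.End.isNilpotent.restrict _ nilpotent)
  have one_le_finrank_ker : 1 ≤ finrank K (LinearMap.ker N) := by
    rw [Submodule.one_le_finrank_iff]
    intro ker_eq_bot
    exact nilpotent.not_isUnit ((LinearMap.isUnit_iff_ker_eq_bot N).2 ker_eq_bot)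
  have := N.finrank_range_add_finrank_ker
  omega

end Nilpotent

theorem stmt9_general [FiniteDimensional K V]
    (f : LinearMap.BilinForm K V) (hsymm : f.IsSymm) (hnd : f.Nondegenerate)
    (φ : V ≃ₗ[K] V) (hφ : φ ∈ orthGroup f)
    (hmin : minpoly K (φ : V →ₗ[K] V) = (X - 1) ^ Module.finrank K V)
    (hdim : 2 ≤ Module.finrank K V) :
    LinearMap.ker ((φ : V →ₗ[K] V) - 1) ≤ LinearMap.range ((φ : V →ₗ[K] V) - 1) ∧
      ∃ g : LinearMap.BilinForm K
          (↥(LinearMap.range ((φ : V →ₗ[K] V) - 1)) ⧸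
            (LinearMap.ker ((φ : V →ₗ[K] V) - 1)).comap
              (LinearMap.range ((φ : V →ₗ[K] V) - 1)).subtype),
        (∀ x y : ↥(LinearMap.range ((φ : V →ₗ[K] V) - 1)),
          g (Submodule.Quotient.mk x) (Submodule.Quotient.mk y) = f (x : V) (y : V)) ∧
        g.IsSymm ∧ g.Nondegenerate ∧
        (∀ d : K, HasDisc g d ↔ HasDisc f (-d)) := by
  have : Nontrivial V := nontrivial_of_finrank_pos (R := K) (by omega)
  have nilpotencyClass_eq : nilpotencyClass ((φ : V →ₗ[K] V) - 1) = finrank K V := by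
    simpa using nilpotencyClass_sub_algebraMap_of_minpoly_eq (x := (φ : V →ₗ[K] V)) (a := (1 : K))
      (by simpa using hmin)
  have finrank_fix := finrank_ker_eq_one_of_nilpotencyClass_eq_finrank nilpotencyClass_eq
  have fix_le_bahn := ker_le_range_of_two_le_nilpotencyClass
    (hdim.trans_eq nilpotencyClass_eq.symm) finrank_fix
  have fix_eq := ker_sub_one_eq_orthogonal_range_sub_one hnd hφ
  refine ⟨fix_le_bahn, inducedForm hsymm fix_eq.le, inducedForm_mk_mk hsymm fix_eq.le,
    inducedForm_isSymm hsymm fix_eq.le, inducedForm_nondegenerate hsymm fix_eq, fun d => ?_⟩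
  rw [hasDisc_inducedForm_iff hsymm hnd fix_eq fix_le_bahn, finrank_fix, pow_one, neg_one_mul]

/-- If `φ ∈ O(V)` is orthogonally indecomposable, indecomposable as a
`K[x]`-module, with minimal polynomial `(x-1)^{dim V}` and `dim V ≥ 3`, then
`Fix(φ) ⊆ Bahn(φ)`, `f` induces a nondegenerate symmetric form on `Bahn(φ)/Fix(φ)`, and
`disc V = -disc (Bahn(φ)/Fix(φ))`. -/
theorem stmt9 [FiniteDimensional K V] (hK : ringChar K ≠ 2)
    (f : LinearMap.BilinForm K V) (hsymm : f.IsSymm) (hnd : f.Nondegenerate)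
    (φ : V ≃ₗ[K] V) (hφ : φ ∈ orthGroup f)
    (hoi : OrthIndec f (φ : V →ₗ[K] V)) (hmi : ModIndec (φ : V →ₗ[K] V))
    (hmin : minpoly K (φ : V →ₗ[K] V) = (X - 1) ^ Module.finrank K V)
    (hdim : 3 ≤ Module.finrank K V) :
    LinearMap.ker ((φ : V →ₗ[K] V) - 1) ≤ LinearMap.range ((φ : V →ₗ[K] V) - 1) ∧
      ∃ g : LinearMap.BilinForm K
          (↥(LinearMap.range ((φ : V →ₗ[K] V) - 1)) ⧸
            (LinearMap.ker ((φ : V →ₗ[K] V) - 1)).comap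
              (LinearMap.range ((φ : V →ₗ[K] V) - 1)).subtype),
        (∀ x y : ↥(LinearMap.range ((φ : V →ₗ[K] V) - 1)),
          g (Submodule.Quotient.mk x) (Submodule.Quotient.mk y) = f (x : V) (y : V)) ∧
        g.IsSymm ∧ g.Nondegenerate ∧
        (∀ d : K, HasDisc g d ↔ HasDisc f (-d)) :=
  stmt9_general f hsymm hnd φ hφ hmin (by omega)

end Biref
end

section
/- Let (V, f) be a finite-dimensional nondegenerate symmetric bilinear space over a field K with char K ≠ 2, and let φ ∈ O(V). Then the centralizer of φ in O(V) is contained in SO(V) if and only if V has no nonzero nondegenerate φ-invariant subspace of odd dimension. -/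
open Polynomial Module

namespace Biref

variable {K V : Type*} [Field K] [AddCommGroup V] [Module K V]

/-!
Let `ξ` be an isometry and let `U` be its generalized eigenspace for the eigenvalue `-1`. The
Fitting complement of `U` is orthogonal to `U`, so `f` is nondegenerate on both summands. On `U` the
determinant of `ξ` is `(-1) ^ dim U`. On the complement `ξ + 1` is invertible, and taking
determinants in `f ((ξ + 1) x) (ξ y) = f x ((ξ + 1) y)` shows that `ξ` has determinant `1` there.
Hence `det ξ = (-1) ^ dim U`, and `U` is invariant under everything that commutes with `ξ`.
Conversely, if `U` is a nondegenerate `φ`-invariant subspace of odd dimension, then the isometry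
that is `-1` on `U` and `1` on its orthogonal complement commutes with `φ` and has determinant `-1`.
-/

section BilinForm

variable {R M : Type*} [CommRing R] [AddCommGroup M] [Module R M] {B : LinearMap.BilinForm R M}

lemma nondegenerate_restrict_of_codisjoint {U W : Submodule R M} (hUW : Codisjoint U W)
    (hB : B.Nondegenerate) (hW : W ≤ B.orthogonal U) (hU : U ≤ B.orthogonal W) :
    (B.restrict U).Nondegenerate := by
  rw [Submodule.codisjoint_iff_exists_add_eq] at hUW
  refine ⟨fun x hx => Subtype.ext (hB.1 x fun y => ?_),
    fun x hx => Subtype.ext (hB.2 x fun y => ?_)⟩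
  · obtain ⟨u, w, hu, hw, rfl⟩ := hUW y
    rw [map_add, hW hw x x.2, add_zero]
    exact hx ⟨u, hu⟩
  · obtain ⟨u, w, hu, hw, rfl⟩ := hUW y
    rw [map_add, LinearMap.add_apply, hU x.2 w hw, add_zero]
    exact hx ⟨u, hu⟩

lemma isOrthogonal_flip {g : End R M} (hg : B.IsOrthogonal g) : B.flip.IsOrthogonal g :=
  fun x y => hg y x

lemma apply_sub_smul_one_pow_apply_pow {g : End R M} (hg : B.IsOrthogonal g) {μ ν : R}
    (hμν : μ * ν = 1) (k : ℕ) (x y : M) :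
    B (((g - μ • 1) ^ k) x) ((g ^ k) y) = (-μ) ^ k * B x (((g - ν • 1) ^ k) y) := by
  have base (x y : M) : B ((g - μ • 1) x) (g y) = -μ * B x ((g - ν • 1) y) := by
    simp only [LinearMap.sub_apply, LinearMap.smul_apply, End.one_apply, map_sub, map_smul,
      smul_eq_mul, hg x y]
    linear_combination -B x y * hμν
  induction k generalizing x y with
  | zero => simp
  | succ k ih =>
    have comm : ((g - ν • 1) ^ k) (g y) = g (((g - ν • 1) ^ k) y) :=
      LinearMap.congr_fun
        (((Commute.refl g).sub_left ((Commute.one_left g).smul_left ν)).pow_left k).eq y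
    rw [pow_succ, pow_succ g, End.mul_apply, End.mul_apply, ih, comm, base,
      pow_succ' (g - ν • 1), End.mul_apply, pow_succ, mul_assoc]

lemma genEigenrange_le_orthogonal_genEigenspace {g : End R M} (hg : B.IsOrthogonal g) {μ ν : R}
    (hμν : μ * ν = 1) (k : ℕ) :
    g.genEigenrange ν k ≤ B.orthogonal (g.genEigenspace μ k) := by
  intro y hy x hx
  rw [End.genEigenrange_nat] at hy
  rw [End.mem_genEigenspace_nat, LinearMap.mem_ker] at hx
  obtain ⟨z, rfl⟩ := hy
  have key := apply_sub_smul_one_pow_apply_pow hg hμν k x z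
  rw [hx, map_zero, LinearMap.zero_apply] at key
  have hunit : IsUnit ((-μ) ^ k) := (IsUnit.of_mul_eq_one ν hμν).neg.pow k
  exact hunit.mul_right_eq_zero.1 key.symm

lemma genEigenspace_le_orthogonal_genEigenrange {g : End R M} (hg : B.IsOrthogonal g) {μ ν : R}
    (hμν : μ * ν = 1) (k : ℕ) :
    g.genEigenspace μ k ≤ B.orthogonal (g.genEigenrange ν k) :=
  fun x hx _ hy => genEigenrange_le_orthogonal_genEigenspace (isOrthogonal_flip hg) hμν k hy x hx

end BilinForm

section Determinant

variable {R M : Type*} [CommRing R] [AddCommGroup M] [Module R M]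

lemma det_eq_det_restrict_mul_det_restrict {U W : Submodule R M} [Module.Free R U]
    [Module.Finite R U] [Module.Free R W] [Module.Finite R W] (hUW : IsCompl U W) {g : End R M}
    (hU : ∀ x ∈ U, g x ∈ U) (hW : ∀ x ∈ W, g x ∈ W) :
    LinearMap.det g = LinearMap.det (g.restrict hU) * LinearMap.det (g.restrict hW) := by
  rw [← LinearMap.det_prodMap, ← LinearMap.det_conj _ (Submodule.prodEquivOfIsCompl U W hUW)]
  congr 1
  ext x
  obtain ⟨⟨u, w⟩, rfl⟩ := (Submodule.prodEquivOfIsCompl U W hUW).surjective x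
  simp

lemma det_eq_pow_finrank_of_isNilpotent_sub_algebraMap [IsDomain R] [Module.Free R M]
    [Module.Finite R M] {g : End R M} {μ : R} (hg : IsNilpotent (g - algebraMap R (End R M) μ)) :
    LinearMap.det g = μ ^ finrank R M := by
  have hneg : algebraMap R (End R M) (-μ) - (g - algebraMap R (End R M) μ) = (-1 : R) • g := by
    rw [map_neg, neg_one_smul]
    abel
  have heval := congrArg (Polynomial.eval (-μ)) hg.charpoly_eq_X_pow_finrank
  rw [LinearMap.eval_charpoly, hneg, LinearMap.det_smul, eval_pow, eval_X, neg_pow μ] at heval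
  exact (isUnit_one.neg.pow _).mul_left_cancel heval

lemma det_eq_one_of_isOrthogonal_of_not_hasEigenvalue_neg_one [FiniteDimensional K V]
    {f : LinearMap.BilinForm K V} (hf : f.Nondegenerate) {g : End K V} (hg : f.IsOrthogonal g)
    (hev : ¬g.HasEigenvalue (-1)) : LinearMap.det g = 1 := by
  have hadj : f.comp (g + 1) g = f.compRight (g + 1) := by
    ext x y
    simp [hg x y, add_comm]
  have hdet := congrArg (fun C => (LinearMap.BilinForm.toMatrix (finBasis K V) C).det) hadj
  simp only [LinearMap.BilinForm.toMatrix_comp (finBasis K V) (finBasis K V),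
    LinearMap.BilinForm.toMatrix_compRight, Matrix.det_mul, Matrix.det_transpose,
    LinearMap.det_toMatrix] at hdet
  have hgram : (LinearMap.BilinForm.toMatrix (finBasis K V) f).det ≠ 0 :=
    (LinearMap.BilinForm.nondegenerate_iff_det_ne_zero _).1 hf
  have hshift : LinearMap.det (g + 1) ≠ 0 := by
    intro hzero
    apply hev
    rw [End.hasEigenvalue_iff, End.eigenspace_def, neg_one_smul, sub_neg_eq_add]
    exact (LinearMap.bot_lt_ker_of_det_eq_zero hzero).ne'
  refine mul_left_cancel₀ (mul_ne_zero hgram hshift) ?_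
  linear_combination hdet

end Determinant

section Fitting

variable [FiniteDimensional K V]

lemma isCompl_maxGenEigenspace_genEigenrange_finrank (g : End K V) (μ : K) :
    IsCompl (g.maxGenEigenspace μ) (g.genEigenrange μ (finrank K V)) := by
  rw [End.maxGenEigenspace_eq_genEigenspace_finrank]
  refine (Submodule.isCompl_iff_disjoint _ _ ?_).2
    (End.generalized_eigenvec_disjoint_range_ker g μ).symm
  rw [End.genEigenspace_nat, End.genEigenrange_nat, add_comm,
    LinearMap.finrank_range_add_finrank_ker]

lemma not_hasEigenvalue_restrict_genEigenrange_finrank (g : End K V) (μ : K)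
    (hg : ∀ x ∈ g.genEigenrange μ (finrank K V), g x ∈ g.genEigenrange μ (finrank K V)) :
    ¬End.HasEigenvalue (g.restrict hg) μ := by
  rw [End.hasEigenvalue_iff, not_not]
  exact End.eigenspace_restrict_eq_bot hg
    ((isCompl_maxGenEigenspace_genEigenrange_finrank g μ).disjoint.mono_left
      End.eigenspace_le_maxGenEigenspace)

variable {f : LinearMap.BilinForm K V} {g : End K V} {μ : K}

lemma nondegenerate_restrict_maxGenEigenspace (hf : f.Nondegenerate) (hg : f.IsOrthogonal g)
    (hμ : μ * μ = 1) : (f.restrict (g.maxGenEigenspace μ)).Nondegenerate := by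
  have hcompl := isCompl_maxGenEigenspace_genEigenrange_finrank g μ
  rw [End.maxGenEigenspace_eq_genEigenspace_finrank] at hcompl ⊢
  exact nondegenerate_restrict_of_codisjoint hcompl.codisjoint hf
    (genEigenrange_le_orthogonal_genEigenspace hg hμ _)
    (genEigenspace_le_orthogonal_genEigenrange hg hμ _)

lemma nondegenerate_restrict_genEigenrange_finrank (hf : f.Nondegenerate)
    (hg : f.IsOrthogonal g) (hμ : μ * μ = 1) :
    (f.restrict (g.genEigenrange μ (finrank K V))).Nondegenerate := by
  have hcompl := isCompl_maxGenEigenspace_genEigenrange_finrank g μ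
  rw [End.maxGenEigenspace_eq_genEigenspace_finrank] at hcompl
  exact nondegenerate_restrict_of_codisjoint hcompl.codisjoint.symm hf
    (genEigenspace_le_orthogonal_genEigenrange hg hμ _)
    (genEigenrange_le_orthogonal_genEigenspace hg hμ _)

theorem det_eq_neg_one_pow_finrank_maxGenEigenspace (hf : f.Nondegenerate)
    (hg : f.IsOrthogonal g) :
    LinearMap.det g = (-1) ^ finrank K (g.maxGenEigenspace (-1)) := by
  have hU : ∀ x ∈ g.maxGenEigenspace (-1), g x ∈ g.maxGenEigenspace (-1) :=
    End.mapsTo_maxGenEigenspace_of_comm rfl (-1)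
  have hW : ∀ x ∈ g.genEigenrange (-1) (finrank K V), g x ∈ g.genEigenrange (-1) (finrank K V) :=
    fun x hx => End.map_genEigenrange_le (Submodule.mem_map_of_mem hx)
  have hdetU : LinearMap.det (g.restrict hU) = (-1) ^ finrank K (g.maxGenEigenspace (-1)) := by
    apply det_eq_pow_finrank_of_isNilpotent_sub_algebraMap
    exact End.isNilpotent_restrict_maxGenEigenspace_sub_algebraMap g (-1)
  have hdetW : LinearMap.det (g.restrict hW) = 1 :=
    det_eq_one_of_isOrthogonal_of_not_hasEigenvalue_neg_one
      (nondegenerate_restrict_genEigenrange_finrank hf hg (by simp)) (fun x y => hg x y)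
      (not_hasEigenvalue_restrict_genEigenrange_finrank g (-1) hW)
  rw [det_eq_det_restrict_mul_det_restrict
    (isCompl_maxGenEigenspace_genEigenrange_finrank g (-1)) hU hW, hdetU, hdetW, mul_one]

end Fitting

section NegOnLeft

variable {R M : Type*} [CommRing R] [AddCommGroup M] [Module R M] {U W : Submodule R M}

/-- The involution of `U ⊕ W` that is `-1` on `U` and `1` on `W`; for `W` the orthogonal complement
of a nondegenerate `U` it is the isometry that reverses `U`. -/
noncomputable def negOnLeft (hUW : IsCompl U W) : M ≃ₗ[R] M :=
  (Submodule.prodEquivOfIsCompl U W hUW).symm ≪≫ₗ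
    (LinearEquiv.neg R).prodCongr (LinearEquiv.refl R W) ≪≫ₗ Submodule.prodEquivOfIsCompl U W hUW

lemma negOnLeft_add (hUW : IsCompl U W) {u w : M} (hu : u ∈ U) (hw : w ∈ W) :
    negOnLeft hUW (u + w) = -u + w := by
  have hsymm : (Submodule.prodEquivOfIsCompl U W hUW).symm (u + w) = (⟨u, hu⟩, ⟨w, hw⟩) := by
    rw [LinearEquiv.symm_apply_eq, Submodule.coe_prodEquivOfIsCompl']
  simp [negOnLeft, hsymm]

lemma isOrthogonal_negOnLeft (hUW : IsCompl U W) {B : LinearMap.BilinForm R M}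
    (hW : W ≤ B.orthogonal U) (hU : U ≤ B.orthogonal W) :
    B.IsOrthogonal (negOnLeft hUW : End R M) := by
  intro x y
  obtain ⟨u, w, hu, hw, rfl⟩ := Submodule.codisjoint_iff_exists_add_eq.1 hUW.codisjoint x
  obtain ⟨u', w', hu', hw', rfl⟩ := Submodule.codisjoint_iff_exists_add_eq.1 hUW.codisjoint y
  have huw : B u w' = 0 := hW hw' u hu
  have hwu : B w u' = 0 := hU hu' w hw
  simp [negOnLeft_add hUW hu hw, negOnLeft_add hUW hu' hw', huw, hwu]

lemma negOnLeft_mul_comm (hUW : IsCompl U W) {φ : M ≃ₗ[R] M}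
    (hU : ∀ x ∈ U, φ x ∈ U) (hW : ∀ x ∈ W, φ x ∈ W) :
    negOnLeft hUW * φ = φ * negOnLeft hUW := by
  ext x
  obtain ⟨u, w, hu, hw, rfl⟩ := Submodule.codisjoint_iff_exists_add_eq.1 hUW.codisjoint x
  simp [LinearEquiv.mul_apply, negOnLeft_add hUW hu hw, map_add φ,
    negOnLeft_add hUW (hU u hu) (hW w hw)]

lemma det_negOnLeft [Module.Free R U] [Module.Finite R U] [Module.Free R W] [Module.Finite R W]
    (hUW : IsCompl U W) : LinearMap.det (negOnLeft hUW : End R M) = (-1) ^ finrank R U := by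
  have hconj : (negOnLeft hUW : End R M) =
      (Submodule.prodEquivOfIsCompl U W hUW).toLinearMap ∘ₗ
        ((-1 : R) • LinearMap.id).prodMap LinearMap.id ∘ₗ
          (Submodule.prodEquivOfIsCompl U W hUW).symm.toLinearMap := by
    ext x
    simp [negOnLeft]
  rw [hconj, LinearMap.det_conj, LinearMap.det_prodMap, LinearMap.det_smul, LinearMap.det_id,
    LinearMap.det_id, mul_one, mul_one]

end NegOnLeft

section OrthGroup

variable {f : LinearMap.BilinForm K V} {φ : V ≃ₗ[K] V}

lemma invt_maxGenEigenspace_of_mul_comm {ξ : V ≃ₗ[K] V} (h : ξ * φ = φ * ξ) (μ : K) :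
    Invt (φ : V →ₗ[K] V) (End.maxGenEigenspace (ξ : V →ₗ[K] V) μ) := by
  have hcomm : Commute (ξ : End K V) (φ : End K V) :=
    congrArg (fun ψ : V ≃ₗ[K] V => (ψ : End K V)) h
  exact End.mapsTo_maxGenEigenspace_of_comm hcomm μ

lemma invt_orthogonal (hφ : φ ∈ orthGroup f) {U : Submodule K V} [FiniteDimensional K U]
    (hU : Invt (φ : V →ₗ[K] V) U) : Invt (φ : V →ₗ[K] V) (f.orthogonal U) := by
  have hmap : U.map (φ : V →ₗ[K] V) = U :=
    Submodule.eq_of_le_of_finrank_eq (Submodule.map_le_iff_le_comap.2 hU)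
      (LinearEquiv.finrank_map_eq φ U)
  intro w hw u hu
  rw [← hmap] at hu
  obtain ⟨v, hv, rfl⟩ := hu
  exact (hφ v w).trans (hw v hv)

lemma exists_commute_det_eq_neg_one_pow_finrank [FiniteDimensional K V] (hf : f.IsRefl)
    (hφ : φ ∈ orthGroup f) {U : Submodule K V} (hU : Invt (φ : V →ₗ[K] V) U)
    (hUnd : (f.restrict U).Nondegenerate) :
    ∃ ξ ∈ orthGroup f, ξ * φ = φ * ξ ∧ LinearMap.det (ξ : V →ₗ[K] V) = (-1) ^ finrank K U := by
  have hcompl := LinearMap.BilinForm.isCompl_orthogonal_of_restrict_nondegenerate hf hUnd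
  exact ⟨negOnLeft hcompl,
    isOrthogonal_negOnLeft hcompl le_rfl (LinearMap.BilinForm.le_orthogonal_orthogonal hf),
    negOnLeft_mul_comm hcompl hU (invt_orthogonal hφ hU), det_negOnLeft hcompl⟩

end OrthGroup

theorem stmt10_general [FiniteDimensional K V] (hK : ringChar K ≠ 2)
    (f : LinearMap.BilinForm K V) (hrefl : f.IsRefl) (hnd : f.Nondegenerate)
    (φ : V ≃ₗ[K] V) (hφ : φ ∈ orthGroup f) :
    (∀ ξ : V ≃ₗ[K] V, ξ ∈ orthGroup f → ξ * φ = φ * ξ →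
        LinearMap.det (ξ : V →ₗ[K] V) = 1) ↔
      ¬∃ U : Submodule K V, U ≠ ⊥ ∧ Invt (φ : V →ₗ[K] V) U ∧
        (f.restrict U).Nondegenerate ∧ Odd (Module.finrank K U) := by
  constructor
  · rintro hdet ⟨U, -, hUinv, hUnd, hodd⟩
    obtain ⟨ξ, hξ, hcomm, hdetξ⟩ := exists_commute_det_eq_neg_one_pow_finrank hrefl hφ hUinv hUnd
    rw [hodd.neg_one_pow, hdet ξ hξ hcomm] at hdetξ
    exact Ring.neg_one_ne_one_of_char_ne_two hK hdetξ.symm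
  · intro hno ξ hξ hcomm
    have hξ' : f.IsOrthogonal (ξ : End K V) := hξ
    rw [det_eq_neg_one_pow_finrank_maxGenEigenspace hnd hξ']
    refine Even.neg_one_pow (Nat.not_odd_iff_even.1 fun hodd => hno ⟨_, ?_,
      invt_maxGenEigenspace_of_mul_comm hcomm (-1),
      nondegenerate_restrict_maxGenEigenspace hnd hξ' (by simp), hodd⟩)
    intro hbot
    rw [hbot, finrank_bot] at hodd
    exact Nat.not_odd_zero hodd

/-- The centralizer of `φ` in `O(V)` is contained in `SO(V)` iff `V` has no
nonzero nondegenerate `φ`-invariant subspace of odd dimension. -/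
theorem stmt10 [FiniteDimensional K V] (hK : ringChar K ≠ 2)
    (f : LinearMap.BilinForm K V) (hsymm : f.IsSymm) (hnd : f.Nondegenerate)
    (φ : V ≃ₗ[K] V) (hφ : φ ∈ orthGroup f) :
    (∀ ξ : V ≃ₗ[K] V, ξ ∈ orthGroup f → ξ * φ = φ * ξ →
        LinearMap.det (ξ : V →ₗ[K] V) = 1) ↔
      ¬∃ U : Submodule K V, U ≠ ⊥ ∧ Invt (φ : V →ₗ[K] V) U ∧
        (f.restrict U).Nondegenerate ∧ Odd (Module.finrank K U) := by
  exact stmt10_general hK f hsymm.isRefl hnd φ hφ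

end Biref
end
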